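/- Let I⊆ℝ be an open interval, let a,b:I→ℝ be absolutely continuous with a(s)≠0 for all s∈I and b(s)≥b₀>0 for all s∈I and some constant b₀. Let f:I×[b₀,∞)→ℂ satisfy: (i) s↦f(s,y) is absolutely continuous on I for every y∈[b₀,∞); (ii) there exist n∈ℕ, α≥0 with n>α+3 such that f(s,·)∈C_α^n([b₀,∞)) and (∂f/∂s)(s,·)∈C_{α+2}^n([b₀,∞)) for almost every s∈I, and the norms ‖f(s,·)‖_{C_α^n([b₀,∞))} and ‖(∂f/∂s)(s,·)‖_{C_{α+2}^n([b₀,∞))} are locally bounded on I. Then for every s∈I and y₀∈ℝ the limit ψ(s) := lim_{ε→0⁺} ∫_{b(s)}^∞ e^{−ε(y−y₀)²} e^{ia(s)y²} f(s,y) dy exists, is independent of y₀, ψ is absolutely continuous on I, and for almost every s∈I one has ψ'(s) = −b'(s) e^{ia(s)b(s)²} f(s,b(s)) + lim_{ε→0⁺} ∫_{b(s)}^∞ e^{−ε(y−y₀)²} (d/ds)( e^{ia(s)y²} f(s,y) ) dy. -/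

import Mathlib

open Set Filter MeasureTheory Topology

noncomputable section

/-- Membership in the space `C_α^n([b,∞))`: `f` is `n`-times continuously differentiable
on `[b,∞)` and its `n`-th derivative satisfies a polynomial bound `M·y^α`. -/
def MemCnAlpha (b : ℝ) (n : ℕ) (α : ℝ) (f : ℝ → ℂ) : Prop :=
  ContDiffOn ℝ n f (Set.Ici b) ∧
    ∃ M : ℝ, 0 ≤ M ∧ ∀ y ∈ Set.Ici b, ‖iteratedDerivWithin n f (Set.Ici b) y‖ ≤ M * y ^ α

/-- The norm on the space `C_α^n([b,∞))`. -/
def CnAlphaNorm (b : ℝ) (n : ℕ) (α : ℝ) (f : ℝ → ℂ) : ℝ :=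
  (∑ k ∈ Finset.range n, ‖iteratedDerivWithin k f (Set.Ici b) b‖ / b ^ ((n : ℝ) - k + α)) +
    ⨆ y : Set.Ici b, ‖iteratedDerivWithin n f (Set.Ici b) y‖ / (y : ℝ) ^ α


/-- Absolute continuity of `g` on a set `I ⊆ ℝ`: `g` is an indefinite integral of a locally
integrable function `h` on `I`. -/
def IsACOn {E : Type*} [NormedAddCommGroup E] [NormedSpace ℝ E] (I : Set ℝ) (g : ℝ → E) : Prop :=
  ∃ h : ℝ → E, MeasureTheory.LocallyIntegrableOn h I ∧
    ∀ s₁ ∈ I, ∀ s₂ ∈ I, s₁ < s₂ → g s₂ - g s₁ = ∫ s in s₁..s₂, h s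


def GBase (b0 γ C : ℝ) (F : ℝ → ℝ → ℝ → ℂ) (F0 : ℝ → ℂ) : Prop :=
  (∀ y0, ∀ ε ∈ Ioc (0:ℝ) 1, ContinuousOn (F y0 ε) (Ici b0) ∧
    ∀ y, b0 ≤ y → ‖F y0 ε y‖ ≤ C * y ^ γ) ∧
  ∀ y0 y, b0 ≤ y → Tendsto (fun ε => F y0 ε y) (𝓝[>] 0) (𝓝 (F0 y))

def GF (b0 : ℝ) : ℕ → ℝ → ℝ → (ℝ → ℝ → ℝ → ℂ) → (ℝ → ℂ) → Prop
  | 0, γ, C, F, F0 => GBase b0 γ C F F0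
  | m+1, γ, C, F, F0 => GBase b0 γ C F F0 ∧ ∃ F' F0',
      (∀ y0, ∀ ε ∈ Ioc (0:ℝ) 1, ∀ y, b0 ≤ y →
        HasDerivWithinAt (F y0 ε) (F' y0 ε y) (Ici b0) y) ∧ GF b0 m (γ - 1) C F' F0'

theorem GF.base {b0 : ℝ} {m : ℕ} {γ C : ℝ} {F F0} (h : GF b0 m γ C F F0) : GBase b0 γ C F F0 := by
  cases m with
  | zero => exact h
  | succ m => exact h.1

theorem GF.pred {b0 : ℝ} {m : ℕ} : ∀ {γ C : ℝ} {F F0}, GF b0 (m+1) γ C F F0 → GF b0 m γ C F F0 := by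
  induction m with
  | zero => intro γ C F F0 h; exact h.1
  | succ m ih =>
    intro γ C F F0 h
    obtain ⟨h1, F', F0', h2, h3⟩ := h
    exact ⟨h1, F', F0', h2, ih h3⟩

theorem GBase.mono {b0 γ C C' : ℝ} (hb : 0 < b0) (hC : C ≤ C') {F F0} (h : GBase b0 γ C F F0) :
    GBase b0 γ C' F F0 := by
  refine ⟨fun y0 ε hε => ⟨(h.1 y0 ε hε).1, fun y hy => ((h.1 y0 ε hε).2 y hy).trans ?_⟩, h.2⟩
  have : 0 < y := by linarith
  gcongr

theorem GF.mono {b0 : ℝ} (hb : 0 < b0) {m : ℕ} : ∀ {γ C C' : ℝ} (_ : C ≤ C') {F F0},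
    GF b0 m γ C F F0 → GF b0 m γ C' F F0 := by
  induction m with
  | zero => intro γ C C' hC F F0 h; exact GBase.mono hb hC h
  | succ m ih =>
    intro γ C C' hC F F0 h
    obtain ⟨h1, F', F0', h2, h3⟩ := h
    exact ⟨h1.mono hb hC, F', F0', h2, ih hC h3⟩

theorem GF.add {b0 : ℝ} {m : ℕ} : ∀ {γ C C' : ℝ} {F F0 G G0},
    GF b0 m γ C F F0 → GF b0 m γ C' G G0 →
    GF b0 m γ (C + C') (fun y0 ε y => F y0 ε y + G y0 ε y) (fun y => F0 y + G0 y) := by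
  have base : ∀ {γ C C' : ℝ} {F F0 G G0}, GBase b0 γ C F F0 → GBase b0 γ C' G G0 →
    GBase b0 γ (C + C') (fun y0 ε y => F y0 ε y + G y0 ε y) (fun y => F0 y + G0 y) := by
    intro γ C C' F F0 G G0 h k
    refine ⟨fun y0 ε hε => ⟨(h.1 y0 ε hε).1.add (k.1 y0 ε hε).1, fun y hy => ?_⟩,
      fun y0 y hy => (h.2 y0 y hy).add (k.2 y0 y hy)⟩
    calc _ ≤ _ := norm_add_le _ _
      _ ≤ _ := add_le_add ((h.1 y0 ε hε).2 y hy) ((k.1 y0 ε hε).2 y hy)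
      _ = _ := by ring
  induction m with
  | zero => intro γ C C' F F0 G G0 h k; exact base h k
  | succ m ih =>
    intro γ C C' F F0 G G0 h k
    obtain ⟨h1, F', F0', h2, h3⟩ := h
    obtain ⟨k1, G', G0', k2, k3⟩ := k
    exact ⟨base h1 k1, _, _, fun y0 ε hε y hy => (h2 y0 ε hε y hy).add (k2 y0 ε hε y hy), ih h3 k3⟩

theorem GF.mul {b0 : ℝ} (hb : 0 < b0) {m : ℕ} : ∀ {γ δ C C' : ℝ} (_ : 0 ≤ C) (_ : 0 ≤ C') {F F0 G G0},
    GF b0 m γ C F F0 → GF b0 m δ C' G G0 →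
    GF b0 m (γ + δ) (2 ^ m * C * C') (fun y0 ε y => F y0 ε y * G y0 ε y) (fun y => F0 y * G0 y) := by
  have base : ∀ {γ δ C C' : ℝ} (_ : 0 ≤ C) (_ : 0 ≤ C') {F F0 G G0},
    GBase b0 γ C F F0 → GBase b0 δ C' G G0 →
    GBase b0 (γ + δ) (C * C') (fun y0 ε y => F y0 ε y * G y0 ε y) (fun y => F0 y * G0 y) := by
    intro γ δ C C' hC hC' F F0 G G0 h k
    refine ⟨fun y0 ε hε => ⟨(h.1 y0 ε hε).1.mul (k.1 y0 ε hε).1, fun y hy => ?_⟩,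
      fun y0 y hy => (h.2 y0 y hy).mul (k.2 y0 y hy)⟩
    have hy0 : 0 < y := by linarith
    calc _ ≤ _ := norm_mul_le _ _
      _ ≤ (C * y ^ γ) * (C' * y ^ δ) := mul_le_mul ((h.1 y0 ε hε).2 y hy) ((k.1 y0 ε hε).2 y hy)
          (norm_nonneg _) (by positivity)
      _ = _ := by rw [Real.rpow_add hy0]; ring
  induction m with
  | zero => intro γ δ C C' hC hC' F F0 G G0 h k; simpa [GF] using base hC hC' h k
  | succ m ih =>
    intro γ δ C C' hC hC' F F0 G G0 h k
    have hp := h.pred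
    have kp := k.pred
    obtain ⟨h1, F', F0', h2, h3⟩ := h
    obtain ⟨k1, G', G0', k2, k3⟩ := k
    refine ⟨(base hC hC' h1 k1).mono hb ?_, fun y0 ε y => F' y0 ε y * G y0 ε y + F y0 ε y * G' y0 ε y,
      fun y => F0' y * G0 y + F0 y * G0' y,
      fun y0 ε hε y hy => (h2 y0 ε hε y hy).mul (k2 y0 ε hε y hy), ?_⟩
    · have : (1:ℝ) ≤ 2 ^ (m+1) := one_le_pow₀ (by norm_num)
      have h3 : 0 ≤ C * C' := by positivity
      nlinarith
    · have e1 := ih hC hC' h3 kp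
      have e2 := ih hC hC' hp k3
      have e3 : γ + (δ - 1) = γ - 1 + δ := by ring
      rw [e3] at e2
      have := e1.add e2
      convert this using 1 <;> ring

theorem GF.zero {b0 : ℝ} (hb : 0 < b0) {m : ℕ} : ∀ {γ C : ℝ} (_ : 0 ≤ C),
    GF b0 m γ C (fun _ _ _ => 0) (fun _ => 0) := by
  have base : ∀ {γ C : ℝ} (_ : 0 ≤ C), GBase b0 γ C (fun _ _ _ => 0) (fun _ => 0) := by
    intro γ C hC
    refine ⟨fun y0 ε hε => ⟨continuousOn_const, fun y hy => ?_⟩, fun y0 y hy => tendsto_const_nhds⟩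
    have hy0 : 0 < y := by linarith
    rw [norm_zero]; positivity
  induction m with
  | zero => intro γ C hC; exact base hC
  | succ m ih =>
    intro γ C hC
    exact ⟨base hC, fun _ _ _ => 0, fun _ => 0, fun y0 ε hε y hy => hasDerivWithinAt_const _ _ _, ih hC⟩

theorem GF.const {b0 : ℝ} (hb : 0 < b0) {m : ℕ} {C : ℝ} {κ : ℝ → ℝ → ℂ} {κ0 : ℂ} (hC : 0 ≤ C)
    (h : ∀ y0, ∀ ε ∈ Ioc (0:ℝ) 1, ‖κ y0 ε‖ ≤ C)
    (h0 : ∀ y0, Tendsto (κ y0) (𝓝[>] 0) (𝓝 κ0)) :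
    GF b0 m 0 C (fun y0 ε _ => κ y0 ε) (fun _ => κ0) := by
  have base : GBase b0 0 C (fun y0 ε _ => κ y0 ε) (fun _ => κ0) :=
    ⟨fun y0 ε hε => ⟨continuousOn_const, fun y hy => by simpa using h y0 ε hε⟩, fun y0 y hy => h0 y0⟩
  cases m with
  | zero => exact base
  | succ m =>
    exact ⟨base, fun _ _ _ => 0, fun _ => 0, fun y0 ε hε y hy => hasDerivWithinAt_const _ _ _,
      GF.zero hb hC⟩

theorem GF.id {b0 : ℝ} (hb : 0 < b0) {m : ℕ} :
    GF b0 m 1 1 (fun _ _ y => (y:ℂ)) (fun y => (y:ℂ)) := by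
  have base : GBase b0 1 1 (fun _ _ y => (y:ℂ)) (fun y => (y:ℂ)) := by
    refine ⟨fun y0 ε hε => ⟨by fun_prop, fun y hy => ?_⟩, fun y0 y hy => tendsto_const_nhds⟩
    have hy0 : 0 < y := by linarith
    simp [abs_of_pos hy0]
  cases m with
  | zero => exact base
  | succ m =>
    refine ⟨base, fun _ _ _ => 1, fun _ => 1, fun y0 ε hε y hy => ?_, ?_⟩
    · exact (HasDerivAt.ofReal_comp (hasDerivAt_id y)).hasDerivWithinAt
    · rw [sub_self]
      exact GF.const hb zero_le_one (by simp) (fun _ => tendsto_const_nhds)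

def ph (a y0 ε y : ℝ) : ℂ := 2 * ((Complex.I * a - ε) * y + ε * y0)

theorem ph_norm {a y0 ε y : ℝ} (hy : 0 < y) : 2 * |a| * y ≤ ‖ph a y0 ε y‖ := by
  have h := Complex.abs_im_le_norm (ph a y0 ε y)
  have : (ph a y0 ε y).im = 2 * (a * y) := by simp [ph]
  rw [this, abs_mul, abs_mul, abs_of_pos hy] at h
  simp at h
  linarith

theorem ph_deriv (a y0 ε y : ℝ) : HasDerivAt (ph a y0 ε) (2 * (Complex.I * a - ε)) y := by
  have h := (HasDerivAt.ofReal_comp (hasDerivAt_id y))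
  have := (((h.const_mul (Complex.I * a - ε)).add_const ((ε:ℂ) * y0)).const_mul 2)
  have e : 2 * ((Complex.I * a - ε) * ((1:ℝ):ℂ)) = 2 * (Complex.I * a - ε) := by simp
  rw [e] at this
  exact this

theorem GF.inv {b0 : ℝ} (hb : 0 < b0) {a0 a1 : ℝ} (ha0 : 0 < a0) (m : ℕ) :
    ∃ C, 0 ≤ C ∧ ∀ a : ℝ, a0 ≤ |a| → |a| ≤ a1 →
      GF b0 m (-1) C (fun y0 ε y => (ph a y0 ε y)⁻¹) (fun y => (2 * Complex.I * a * y)⁻¹) := by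
  have base : ∀ a : ℝ, a0 ≤ |a| → |a| ≤ a1 → GBase b0 (-1) (2 * a0)⁻¹
      (fun y0 ε y => (ph a y0 ε y)⁻¹) (fun y => (2 * Complex.I * a * y)⁻¹) := by
    intro a ha h1
    have hane : a ≠ 0 := by rintro rfl; simp at ha; linarith
    refine ⟨fun y0 ε hε => ⟨?_, fun y hy => ?_⟩, fun y0 y hy => ?_⟩
    · intro y hy
      have hy0 : 0 < y := lt_of_lt_of_le hb hy
      refine ((ph_deriv a y0 ε y).continuousAt.inv₀ ?_).continuousWithinAt
      rw [← norm_pos_iff]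
      exact lt_of_lt_of_le (by positivity) (ph_norm hy0)
    · have hy0 : 0 < y := by linarith
      rw [norm_inv, Real.rpow_neg_one, ← mul_inv]
      apply inv_anti₀ (by positivity)
      refine le_trans ?_ (ph_norm hy0)
      gcongr
    · have hy0 : 0 < y := by linarith
      have : Tendsto (fun ε : ℝ => ph a y0 ε y) (𝓝[>] 0) (𝓝 (ph a y0 0 y)) := by
        apply Tendsto.mono_left _ nhdsWithin_le_nhds
        have : Continuous (fun ε : ℝ => ph a y0 ε y) := by unfold ph; fun_prop
        exact this.tendsto 0
      have e : ph a y0 0 y = 2 * Complex.I * a * y := by simp [ph]; ring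
      rw [e] at this
      refine this.inv₀ ?_
      have : (a:ℂ) ≠ 0 := by exact_mod_cast hane
      have : (y:ℂ) ≠ 0 := by exact_mod_cast hy0.ne'
      simp [*]
  induction m with
  | zero => exact ⟨(2 * a0)⁻¹, by positivity, base⟩
  | succ m ih =>
    obtain ⟨C, hC, ih⟩ := ih
    have hk : 0 ≤ 2 * (|a1| + 1) := by positivity
    refine ⟨(2 * a0)⁻¹ + (2 ^ m * (2 * (|a1| + 1)) * (2 ^ m * C * C)), by positivity, fun a ha h1 => ?_⟩
    have hc : GF b0 m 0 (2 * (|a1| + 1)) (fun _ ε _ => -(2 * (Complex.I * a - (ε:ℂ)))) 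
        (fun _ => -(2 * (Complex.I * a - (0:ℝ)))) := by
      refine GF.const (κ := fun _ ε => -(2 * (Complex.I * a - (ε:ℂ)))) hb hk (fun y0 ε hε => ?_) (fun y0 => ?_)
      · rw [norm_neg, norm_mul]
        simp only [Complex.norm_ofNat]
        gcongr
        refine (norm_sub_le _ _).trans ?_
        simp
        have := le_abs_self a1
        rw [abs_of_pos hε.1]
        linarith [hε.2]
      · apply Tendsto.mono_left _ nhdsWithin_le_nhds
        have : Continuous (fun ε : ℝ => -(2 * (Complex.I * a - (ε:ℂ)))) := by fun_prop
        exact this.tendsto 0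
    have i := ih a ha h1
    have p := GF.mul hb hk (by positivity) hc (GF.mul hb hC hC i i)
    refine ⟨(base a ha h1).mono hb ?_,
      fun y0 ε y => -(2 * (Complex.I * a - (ε:ℂ))) * ((ph a y0 ε y)⁻¹ * (ph a y0 ε y)⁻¹),
      fun y => -(2 * (Complex.I * a - (0:ℝ))) * ((2 * Complex.I * a * y)⁻¹ * (2 * Complex.I * a * y)⁻¹), ?_, ?_⟩
    · have : 0 ≤ (2 ^ m * (2 * (|a1| + 1)) * (2 ^ m * C * C)) := by positivity
      linarith
    rotate_left
    · have e : (0:ℝ) + (-1 + -1) = -1 - 1 := by norm_num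
      rw [e] at p
      refine GF.mono hb ?_ p
      have : 0 ≤ (2 * a0)⁻¹ := by positivity
      linarith
    · intro y0 ε hε y hy
      have hy0 : 0 < y := by linarith
      have hap : 0 < |a| := by linarith
      have hne : ph a y0 ε y ≠ 0 := by
        rw [← norm_pos_iff]
        exact lt_of_lt_of_le (by positivity) (ph_norm hy0)
      have h := ((ph_deriv a y0 ε y).fun_inv hne).hasDerivWithinAt (s := Ici b0)
      have e : -(2 * (Complex.I * a - (ε:ℂ))) * ((ph a y0 ε y)⁻¹ * (ph a y0 ε y)⁻¹) =
        -(2 * (Complex.I * a - (ε:ℂ))) / (ph a y0 ε y) ^ 2 := by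
        field_simp
      simp only [e]
      exact h

theorem gdom {b0 : ℝ} (hb : 0 < b0) (γ ε y0 : ℝ) (hε : 0 < ε) :
    ∃ K, 0 ≤ K ∧ ∀ y, b0 ≤ y → y ^ γ * Real.exp (-ε * (y - y0) ^ 2) ≤ K * y ^ (-2:ℝ) := by
  have h := rexp_neg_quadratic_isLittleO_rpow_atTop (a := -ε) (by linarith) (2 * ε * y0) (-(γ + 2))
  have h1 := h.bound (c := 1) one_pos
  obtain ⟨Y, hY⟩ := eventually_atTop.1 h1
  have hc : ContinuousOn (fun y : ℝ => y ^ (γ + 2) * Real.exp (-ε * (y - y0) ^ 2)) (Icc b0 (max Y b0)) := by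
    apply ContinuousOn.mul
    · intro y hy
      exact (Real.continuousAt_rpow_const _ _ (Or.inl (by linarith [hy.1] : (0:ℝ) < y).ne')).continuousWithinAt
    · fun_prop
  obtain ⟨K, hK⟩ := isCompact_Icc.exists_bound_of_continuousOn hc
  refine ⟨max K 1, by positivity, fun y hy => ?_⟩
  have hy0 : 0 < y := by linarith
  have key : y ^ (γ + 2) * Real.exp (-ε * (y - y0) ^ 2) ≤ max K 1 := by
    rcases le_total y (max Y b0) with h2 | h2
    · exact (le_abs_self _).trans ((hK y ⟨hy, h2⟩).trans (le_max_left _ _))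
    · have := hY y ((le_max_left _ _).trans h2)
      rw [Real.norm_of_nonneg (Real.exp_pos _).le, Real.norm_of_nonneg (by positivity), one_mul,
        Real.rpow_neg hy0.le] at this
      refine le_trans ?_ (le_max_right _ _)
      have h3 : Real.exp (-ε * (y - y0) ^ 2) ≤ (y ^ (γ + 2))⁻¹ := by
        refine le_trans ?_ this
        apply Real.exp_le_exp.2
        nlinarith [sq_nonneg y0]
      calc _ ≤ y ^ (γ + 2) * (y ^ (γ + 2))⁻¹ := by gcongr
        _ = 1 := mul_inv_cancel₀ (by positivity)
  calc y ^ γ * Real.exp (-ε * (y - y0) ^ 2) = (y ^ (γ + 2) * Real.exp (-ε * (y - y0) ^ 2)) * y ^ (-2:ℝ) := by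
        rw [Real.rpow_add hy0, Real.rpow_neg hy0.le]
        have : y ^ (2:ℝ) ≠ 0 := by positivity
        field_simp
    _ ≤ _ := by gcongr

def ww (a y0 ε y : ℝ) : ℂ :=
  Complex.exp (-(ε : ℂ) * (y - y0) ^ 2) * Complex.exp (Complex.I * a * y ^ 2)

theorem norm_ww (a y0 ε y : ℝ) : ‖ww a y0 ε y‖ = Real.exp (-ε * (y - y0) ^ 2) := by
  rw [ww, norm_mul, Complex.norm_exp, Complex.norm_exp]
  have e1 : (-(ε : ℂ) * (y - y0) ^ 2) = ((-ε * (y - y0) ^ 2 : ℝ) : ℂ) := by push_cast; ring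
  have e2 : (Complex.I * a * y ^ 2).re = 0 := by
    have : (Complex.I * a * y ^ 2) = ((a * y ^ 2 : ℝ) : ℂ) * Complex.I := by push_cast; ring
    rw [this, Complex.re_ofReal_mul]; simp
  rw [e1, e2, Complex.ofReal_re]; simp

theorem norm_ww_le {a y0 ε y : ℝ} (hε : 0 ≤ ε) : ‖ww a y0 ε y‖ ≤ 1 := by
  rw [norm_ww]; apply Real.exp_le_one_iff.2; nlinarith [sq_nonneg (y - y0)]

theorem continuous_ww (a y0 ε : ℝ) : Continuous (ww a y0 ε) := by unfold ww; fun_prop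

theorem ww_deriv (a y0 ε y : ℝ) : HasDerivAt (ww a y0 ε) (ww a y0 ε y * ph a y0 ε y) y := by
  have h : HasDerivAt (fun y : ℝ => (y:ℂ)) 1 y := by
    exact_mod_cast (HasDerivAt.ofReal_comp (hasDerivAt_id y))
  have h1 := (((h.sub_const (y0:ℂ)).fun_pow 2).const_mul (-(ε:ℂ))).cexp
  have h2 := ((h.fun_pow 2).const_mul (Complex.I * a)).cexp
  have h3 := h1.mul h2
  have e : ww a y0 ε y * ph a y0 ε y = Complex.exp (-(ε:ℂ) * (y - y0) ^ 2) * (-(ε:ℂ) * (2 * (y - y0))) * Complex.exp (Complex.I * a * y ^ 2) + Complex.exp (-(ε:ℂ) * (y - y0) ^ 2) * (Complex.exp (Complex.I * a * y ^ 2) * (Complex.I * a * (2 * y))) := by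
    unfold ww ph; ring
  rw [e]
  refine h3.congr_deriv ?_
  norm_num

theorem tendsto_ww (a y0 y : ℝ) : Tendsto (fun ε : ℝ => ww a y0 ε y) (𝓝[>] 0) (𝓝 (Complex.exp (Complex.I * a * y ^ 2))) := by
  apply Tendsto.mono_left _ nhdsWithin_le_nhds
  have : Continuous (fun ε : ℝ => ww a y0 ε y) := by unfold ww; fun_prop
  have := this.tendsto 0
  simpa [ww] using this

theorem ww_bound {b0 : ℝ} (hb : 0 < b0) (γ C ε y0 : ℝ) (hε : 0 < ε) (hC : 0 ≤ C) :
    ∃ K, 0 ≤ K ∧ ∀ a y : ℝ, b0 ≤ y → ∀ z : ℂ, ‖z‖ ≤ C * y ^ γ → ‖ww a y0 ε y * z‖ ≤ K * y ^ (-2:ℝ) := by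
  obtain ⟨K, hK, h⟩ := gdom hb γ ε y0 hε
  refine ⟨C * K, by positivity, fun a y hy z hz => ?_⟩
  rw [norm_mul, norm_ww]
  calc _ ≤ Real.exp (-ε * (y - y0) ^ 2) * (C * y ^ γ) := by gcongr
    _ = C * (y ^ γ * Real.exp (-ε * (y - y0) ^ 2)) := by ring
    _ ≤ C * (K * y ^ (-2:ℝ)) := mul_le_mul_of_nonneg_left (h y hy) hC
    _ = _ := by ring

theorem integrableOn_m2 {t : ℝ} (ht : 0 < t) (K : ℝ) : IntegrableOn (fun y : ℝ => K * y ^ (-2:ℝ)) (Ioi t) :=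
  (integrableOn_Ioi_rpow_of_lt (by norm_num) ht).const_mul K

theorem ww_integrable {b0 : ℝ} (hb : 0 < b0) {γ C ε y0 a t : ℝ} (hε : 0 < ε) (hC : 0 ≤ C) (ht : b0 ≤ t)
    {F : ℝ → ℂ} (hF : ContinuousOn F (Ici b0)) (hFb : ∀ y, b0 ≤ y → ‖F y‖ ≤ C * y ^ γ) :
    IntegrableOn (fun y => ww a y0 ε y * F y) (Ioi t) := by
  obtain ⟨K, hK, h⟩ := ww_bound hb γ C ε y0 hε hC
  refine Integrable.mono' (integrableOn_m2 (by linarith) K) ?_ ?_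
  · apply ContinuousOn.aestronglyMeasurable _ measurableSet_Ioi
    apply ContinuousOn.mul (continuous_ww _ _ _).continuousOn
    exact hF.mono (fun y hy => ht.trans (le_of_lt hy))
  · refine (ae_restrict_iff' measurableSet_Ioi).2 (ae_of_all _ fun y hy => ?_)
    have := ht.trans (le_of_lt hy)
    exact h a y this _ (hFb y this)

theorem ww_tendsto_zero {b0 : ℝ} (hb : 0 < b0) {γ C ε y0 a : ℝ} (hε : 0 < ε) (hC : 0 ≤ C) 
    {F : ℝ → ℂ} (hFb : ∀ y, b0 ≤ y → ‖F y‖ ≤ C * y ^ γ) :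
    Tendsto (fun y => ww a y0 ε y * F y) atTop (𝓝 0) := by
  obtain ⟨K, hK, h⟩ := ww_bound hb γ C ε y0 hε hC
  have h0 : Tendsto (fun y : ℝ => K * y ^ (-2:ℝ)) atTop (𝓝 0) := by
    simpa using (tendsto_rpow_neg_atTop (by norm_num : (0:ℝ) < 2)).const_mul K
  refine squeeze_zero_norm' ?_ h0
  filter_upwards [eventually_ge_atTop b0] with y hy
  exact h a y hy _ (hFb y hy)

theorem osc {b0 B a0 a1 : ℝ} (hb : 0 < b0) (ha0 : 0 < a0) (m : ℕ) : ∀ (γ C : ℝ), 0 ≤ C → γ - 2 * m < -1 →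
    ∃ K, 0 ≤ K ∧ ∀ a : ℝ, a0 ≤ |a| → |a| ≤ a1 → ∀ F F0, GF b0 m γ C F F0 → ∀ t ∈ Icc b0 B,
      (∀ y0, ∀ ε ∈ Ioc (0:ℝ) 1, ‖∫ y in Ioi t, ww a y0 ε y * F y0 ε y‖ ≤ K) ∧
      ∃ L, ∀ y0, Tendsto (fun ε => ∫ y in Ioi t, ww a y0 ε y * F y0 ε y) (𝓝[>] 0) (𝓝 L) := by
  induction m with
  | zero =>
    intro γ C hC hγ
    simp at hγ
    have hint : ∀ t, b0 ≤ t → IntegrableOn (fun y : ℝ => C * y ^ γ) (Ioi t) := fun t ht =>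
      (integrableOn_Ioi_rpow_of_lt hγ (by linarith)).const_mul C
    refine ⟨∫ y in Ioi b0, C * y ^ γ, setIntegral_nonneg measurableSet_Ioi
      (fun y hy => by have : 0 < y := hb.trans hy; positivity), fun a ha ha' F F0 hF t ht => ?_⟩
    have hbd : ∀ y0, ∀ ε ∈ Ioc (0:ℝ) 1, ∀ y ∈ Ioi t, ‖ww a y0 ε y * F y0 ε y‖ ≤ C * y ^ γ := by
      intro y0 ε hε y hy
      rw [norm_mul]
      have h1 := (hF.1 y0 ε hε).2 y (ht.1.trans (le_of_lt hy))
      have h2 := norm_ww_le (a := a) (y0 := y0) (y := y) hε.1.le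
      nlinarith [norm_nonneg (F y0 ε y), norm_nonneg (ww a y0 ε y)]
    refine ⟨fun y0 ε hε => ?_, ∫ y in Ioi t, Complex.exp (Complex.I * a * y ^ 2) * F0 y, fun y0 => ?_⟩
    · calc _ ≤ ∫ y in Ioi t, C * y ^ γ := by
            refine norm_integral_le_of_norm_le (hint t ht.1) ?_
            exact (ae_restrict_iff' measurableSet_Ioi).2 (ae_of_all _ (hbd y0 ε hε))
        _ ≤ _ := by
            refine setIntegral_mono_set (hint b0 le_rfl) ?_ (Ioi_subset_Ioi ht.1).eventuallyLE
            refine (ae_restrict_iff' measurableSet_Ioi).2 (ae_of_all _ fun y hy => ?_)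
            have : 0 < y := hb.trans hy
            simp only [Pi.zero_apply]
            positivity
    · have hev : ∀ᶠ ε in 𝓝[>] (0:ℝ), ε ∈ Ioc (0:ℝ) 1 := Ioc_mem_nhdsGT one_pos
      refine tendsto_integral_filter_of_dominated_convergence (fun y => C * y ^ γ) ?_ ?_ (hint t ht.1) ?_
      · filter_upwards [hev] with ε hε
        apply ContinuousOn.aestronglyMeasurable _ measurableSet_Ioi
        apply ContinuousOn.mul (continuous_ww _ _ _).continuousOn
        exact (hF.1 y0 ε hε).1.mono (fun y hy => ht.1.trans (le_of_lt hy))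
      · filter_upwards [hev] with ε hε
        exact (ae_restrict_iff' measurableSet_Ioi).2 (ae_of_all _ (hbd y0 ε hε))
      · refine (ae_restrict_iff' measurableSet_Ioi).2 (ae_of_all _ fun y hy => ?_)
        exact (tendsto_ww a y0 y).mul (hF.2 y0 y (ht.1.trans (le_of_lt hy)))
  | succ m ih =>
    intro γ C hC hγ
    obtain ⟨R, hR, hinv⟩ := GF.inv (b0 := b0) hb ha0 (a1 := a1) (m+1)
    set C' := 2 ^ (m+1) * C * R with hC'
    have hC'0 : 0 ≤ C' := by positivity
    obtain ⟨K, hK, ih⟩ := ih (γ + -1 - 1) C' hC'0 (by push_cast at hγ; linarith)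
    -- bound for boundary term
    have hcont : ContinuousOn (fun y : ℝ => C' * y ^ (γ + -1)) (Icc b0 B) := by
      apply ContinuousOn.mul continuousOn_const
      intro y hy
      exact (Real.continuousAt_rpow_const _ _ (Or.inl (by linarith [hy.1] : (0:ℝ) < y).ne')).continuousWithinAt
    obtain ⟨K2, hK2⟩ := isCompact_Icc.exists_bound_of_continuousOn hcont
    refine ⟨|K2| + K, by positivity, fun a ha ha' F F0 hF t ht => ?_⟩
    have hP := GF.mul hb hC hR hF (hinv a ha ha')
    obtain ⟨hP1, D, D0, hD, hDG⟩ := hP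
    obtain ⟨i1, L, hL⟩ := ih a ha ha' D D0 hDG t ht
    have hib : ∀ y0, ∀ ε ∈ Ioc (0:ℝ) 1, ∫ y in Ioi t, ww a y0 ε y * F y0 ε y =
        - (ww a y0 ε t * (F y0 ε t * (ph a y0 ε t)⁻¹)) - ∫ y in Ioi t, ww a y0 ε y * D y0 ε y := by
      intro y0 ε hε
      have hI1 := ww_integrable (a := a) (y0 := y0) hb hε.1 hC ht.1 (hF.base.1 y0 ε hε).1 (hF.base.1 y0 ε hε).2
      have hI2 := ww_integrable (a := a) (y0 := y0) hb hε.1 hC'0 ht.1 (hDG.base.1 y0 ε hε).1 (hDG.base.1 y0 ε hε).2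
      have hz := ww_tendsto_zero (a := a) (y0 := y0) hb hε.1 hC'0 (hP1.1 y0 ε hε).2
      have hft := integral_Ioi_of_hasDerivAt_of_tendsto (a := t) 
        (f := fun y => ww a y0 ε y * (F y0 ε y * (ph a y0 ε y)⁻¹))
        (f' := fun y => ww a y0 ε y * F y0 ε y + ww a y0 ε y * D y0 ε y) (m := 0) ?_ ?_ ?_ hz
      · rw [integral_add hI1 hI2] at hft
        rw [eq_sub_iff_add_eq, hft]; ring
      · refine (continuous_ww _ _ _).continuousWithinAt.mul ?_
        exact ((hP1.1 y0 ε hε).1 t ht.1).mono (Ici_subset_Ici.2 ht.1)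
      · intro y hy
        have hyb : b0 < y := lt_of_le_of_lt ht.1 hy
        have hy0 : 0 < y := by linarith
        have h1 := (hD y0 ε hε y hyb.le).hasDerivAt (Ici_mem_nhds hyb)
        have h2 := (ww_deriv a y0 ε y).mul h1
        refine h2.congr_deriv ?_
        have hap : 0 < |a| := by linarith
        have hne : ph a y0 ε y ≠ 0 := by
          rw [← norm_pos_iff]
          exact lt_of_lt_of_le (by positivity) (ph_norm hy0)
        field_simp
      · exact hI1.add hI2
    refine ⟨fun y0 ε hε => ?_, -(Complex.exp (Complex.I * a * t ^ 2) * (F0 t * (2 * Complex.I * a * t)⁻¹)) - L, fun y0 => ?_⟩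
    · rw [hib y0 ε hε]
      refine (norm_sub_le _ _).trans (add_le_add ?_ (i1 y0 ε hε))
      rw [norm_neg, norm_mul]
      have h1 := (hP1.1 y0 ε hε).2 t ht.1
      have h2 := norm_ww_le (a := a) (y0 := y0) (y := t) hε.1.le
      have h3 := (le_abs_self _).trans (hK2 t ht)
      have h4 := le_abs_self K2
      have h5 := mul_le_mul_of_nonneg_right h2 (norm_nonneg (F y0 ε t * (ph a y0 ε t)⁻¹))
      linarith
    · have hev : ∀ᶠ ε in 𝓝[>] (0:ℝ), ε ∈ Ioc (0:ℝ) 1 := Ioc_mem_nhdsGT one_pos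
      refine Tendsto.congr' (f₁ := fun ε => - (ww a y0 ε t * (F y0 ε t * (ph a y0 ε t)⁻¹)) - ∫ y in Ioi t, ww a y0 ε y * D y0 ε y) ?_ ?_
      · filter_upwards [hev] with ε hε using (hib y0 ε hε).symm
      · exact ((tendsto_ww a y0 t).mul (hP1.2 y0 t ht.1)).neg.sub (hL y0)

theorem memGF {b0 : ℝ} (hb : 0 < b0) {n : ℕ} {α M : ℝ} (hα : 0 ≤ α) {f : ℝ → ℂ}
    (hf : MemCnAlpha b0 n α f) (hM : CnAlphaNorm b0 n α f ≤ M) :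
    0 ≤ M ∧ GF b0 n (n + α) ((n + 1) * M) (fun _ _ => f) f := by
  obtain ⟨hcd, M', hM'0, hM'⟩ := hf
  unfold CnAlphaNorm at hM
  have hsup0 : 0 ≤ ⨆ y : Set.Ici b0, ‖iteratedDerivWithin n f (Set.Ici b0) y‖ / (y : ℝ) ^ α :=
    Real.iSup_nonneg fun y => by
      have : 0 < (y:ℝ) := lt_of_lt_of_le hb y.2
      positivity
  have hterm0 : ∀ k ∈ Finset.range n, 0 ≤ ‖iteratedDerivWithin k f (Set.Ici b0) b0‖ / b0 ^ ((n : ℝ) - k + α) :=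
    fun k _ => by positivity
  have hsum0 := Finset.sum_nonneg hterm0
  have hM0 : 0 ≤ M := by linarith
  have hk : ∀ k < n, ‖iteratedDerivWithin k f (Set.Ici b0) b0‖ ≤ M * b0 ^ ((n : ℝ) - k + α) := by
    intro k hk
    have h1 := Finset.single_le_sum hterm0 (Finset.mem_range.2 hk)
    have h2 : ‖iteratedDerivWithin k f (Set.Ici b0) b0‖ / b0 ^ ((n : ℝ) - k + α) ≤ M := by linarith
    rwa [div_le_iff₀ (by positivity)] at h2
  have htop : ∀ y, b0 ≤ y → ‖iteratedDerivWithin n f (Set.Ici b0) y‖ ≤ M * y ^ α := by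
    intro y hy
    have hy0 : 0 < y := by linarith
    have hbdd : BddAbove (range fun y : Set.Ici b0 => ‖iteratedDerivWithin n f (Set.Ici b0) y‖ / (y : ℝ) ^ α) := by
      refine ⟨M', ?_⟩
      rintro _ ⟨z, rfl⟩
      have hz : 0 < (z:ℝ) := lt_of_lt_of_le hb z.2
      simp only
      rw [div_le_iff₀ (by positivity)]
      exact hM' z z.2
    have h1 := le_ciSup hbdd ⟨y, hy⟩
    simp only at h1
    have h2 : ‖iteratedDerivWithin n f (Set.Ici b0) y‖ / y ^ α ≤ M := by linarith
    rwa [div_le_iff₀ (by positivity)] at h2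
  refine ⟨hM0, ?_⟩
  have hud : UniqueDiffOn ℝ (Ici b0) := uniqueDiffOn_Ici b0
  have T : ∀ j ≤ n, GF b0 j (j + α) ((j + 1) * M) (fun _ _ => iteratedDerivWithin (n - j) f (Ici b0))
      (iteratedDerivWithin (n - j) f (Ici b0)) := by
    intro j
    induction j with
    | zero =>
      intro _
      refine ⟨fun y0 ε hε => ⟨hcd.continuousOn_iteratedDerivWithin (by simp) hud, fun y hy => ?_⟩, fun _ _ _ => tendsto_const_nhds⟩
      simpa using htop y hy
    | succ j ih =>
      intro hj
      have ih := ih (by omega)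
      have e : n - j = (n - (j+1)) + 1 := by omega
      have hd : ∀ y, b0 ≤ y → HasDerivWithinAt (iteratedDerivWithin (n - (j+1)) f (Ici b0))
          (iteratedDerivWithin (n - j) f (Ici b0) y) (Ici b0) y := by
        intro y hy
        rw [e, iteratedDerivWithin_succ]
        refine DifferentiableWithinAt.hasDerivWithinAt ?_
        exact hcd.differentiableOn_iteratedDerivWithin (by exact_mod_cast (by omega)) hud y hy
      refine ⟨⟨fun y0 ε hε => ⟨fun y hy => (hd y hy).continuousWithinAt, fun y hy => ?_⟩, fun _ _ _ => tendsto_const_nhds⟩,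
        fun _ _ => iteratedDerivWithin (n - j) f (Ici b0), iteratedDerivWithin (n - j) f (Ici b0), fun _ _ _ => hd, ?_⟩
      · have hy0 : 0 < y := by linarith
        have hb1 : ∀ x ∈ Icc b0 y, ‖iteratedDerivWithin (n - j) f (Ici b0) x‖ ≤ ((j + 1) * M) * y ^ (j + α) := by
          intro x hx
          have hx0 : 0 < x := by linarith [hx.1]
          refine ((ih.base.1 0 1 (by simp)).2 x hx.1).trans ?_
          gcongr
          exact hx.2
        have h1 := (convex_Icc b0 y).norm_image_sub_le_of_norm_hasDerivWithin_le
          (fun x hx => (hd x hx.1).mono Icc_subset_Ici_self) hb1 (left_mem_Icc.2 hy) (right_mem_Icc.2 hy)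
        have h2 := hk (n - (j+1)) (by omega)
        have e2 : ((n:ℝ) - ((n - (j+1) : ℕ) : ℝ) + α) = (j + α) + 1 := by
          rw [Nat.cast_sub hj]; push_cast; ring
        rw [e2] at h2
        have h3 : b0 ^ (j + α + 1) ≤ y ^ (j + α + 1) := by gcongr
        have h4 : ‖y - b0‖ ≤ y := by rw [Real.norm_of_nonneg (by linarith)]; linarith
        have h5 : ‖iteratedDerivWithin (n - (j+1)) f (Ici b0) y‖ ≤
            ‖iteratedDerivWithin (n - (j+1)) f (Ici b0) b0‖ + ((j + 1) * M) * y ^ (j + α) * ‖y - b0‖ := by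
          have := norm_le_norm_add_norm_sub' (iteratedDerivWithin (n - (j+1)) f (Ici b0) y) (iteratedDerivWithin (n - (j+1)) f (Ici b0) b0)
          linarith
        have e3 : y ^ (((j + 1 : ℕ) : ℝ) + α) = y ^ (j + α + 1) := by push_cast; ring_nf
        rw [e3]
        have h6 : ((j + 1) * M) * y ^ (j + α) * ‖y - b0‖ ≤ ((j + 1) * M) * y ^ (j + α) * y := by gcongr
        have h7 : y ^ (j + α + 1) = y ^ (j + α) * y := by rw [Real.rpow_add hy0, Real.rpow_one]
        have h8 : M * b0 ^ (j + α + 1) ≤ M * y ^ (j + α + 1) := by gcongr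
        push_cast
        rw [h7] at *
        linarith
      · have e4 : ((j + 1 : ℕ) : ℝ) + α - 1 = j + α := by push_cast; ring
        rw [e4]
        refine GF.mono hb ?_ ih
        push_cast
        linarith
  have := T n le_rfl
  simpa using this

theorem GF.ysq {b0 : ℝ} (hb : 0 < b0) {m : ℕ} {γ C : ℝ} (hC : 0 ≤ C) {f : ℝ → ℂ}
    (h : GF b0 m γ C (fun _ _ => f) f) : GF b0 m (γ + 2) (2 ^ m * (2 ^ m * 1 * 1) * C) (fun _ _ y => (y:ℂ) ^ 2 * f y) (fun y => (y:ℂ) ^ 2 * f y) := by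
  have := GF.mul hb (by positivity) hC (GF.mul hb zero_le_one zero_le_one (GF.id (m := m) hb) (GF.id hb)) h
  simp only [← sq] at this
  convert this using 1
  ring

/-- Carathéodory measurability -/
theorem cara {Ω : Type*} [MeasurableSpace Ω] {μ : Measure Ω} {b0 : ℝ} {h : Ω → ℝ → ℂ} {τ : Ω → ℝ}
    (hm : ∀ t, b0 ≤ t → AEStronglyMeasurable (fun ω => h ω t) μ)
    (hc : ∀ᵐ ω ∂μ, ContinuousOn (h ω) (Ici b0)) (hτ : AEMeasurable τ μ) (hτb : ∀ᵐ ω ∂μ, b0 ≤ τ ω) :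
    AEStronglyMeasurable (fun ω => h ω (τ ω)) μ := by
  -- reduce to measurable τ
  set σ := hτ.mk τ with hσ
  have hσm : Measurable σ := hτ.measurable_mk
  have hστ : τ =ᵐ[μ] σ := hτ.ae_eq_mk
  have pt : ∀ (k j : ℕ), b0 ≤ b0 + (j:ℝ) / ((k:ℝ) + 1) := fun k j => by
    have : (0:ℝ) ≤ (j:ℝ) / ((k:ℝ) + 1) := by positivity
    linarith
  let N : ℕ → Ω → ℕ := fun k ω => ⌊(σ ω - b0) * ((k:ℝ) + 1)⌋₊
  have hN : ∀ k, Measurable (N k) := fun k => Nat.measurable_floor.comp (by fun_prop)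
  let τk : ℕ → Ω → ℝ := fun k ω => b0 + (N k ω : ℝ) / ((k:ℝ) + 1)
  refine aestronglyMeasurable_of_tendsto_ae (u := atTop) (f := fun k ω => h ω (τk k ω)) ?_ ?_
  · intro k
    let g : Ω × ℕ → ℂ := fun p => (hm _ (pt k p.2)).mk _ p.1
    have hg : Measurable g := measurable_from_prod_countable_left fun j => (hm _ (pt k j)).stronglyMeasurable_mk.measurable
    refine ⟨fun ω => g (ω, N k ω), (hg.comp (measurable_id.prodMk (hN k))).stronglyMeasurable, ?_⟩
    have : ∀ᵐ ω ∂μ, ∀ j : ℕ, h ω (b0 + (j:ℝ) / ((k:ℝ) + 1)) = g (ω, j) := ae_all_iff.2 fun j => (hm _ (pt k j)).ae_eq_mk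
    filter_upwards [this] with ω hω
    exact hω (N k ω)
  · filter_upwards [hc, hστ, hτb] with ω hω h1 h2
    have ht : Tendsto (fun k => τk k ω) atTop (𝓝 (τ ω)) := by
      have hnn : 0 ≤ σ ω - b0 := by rw [← h1]; linarith
      have a1 : Tendsto (fun k : ℕ => τ ω - 1 / ((k:ℝ) + 1)) atTop (𝓝 (τ ω)) := by
        simpa using tendsto_const_nhds.sub (tendsto_one_div_add_atTop_nhds_zero_nat (𝕜 := ℝ))
      refine tendsto_of_tendsto_of_tendsto_of_le_of_le a1 tendsto_const_nhds ?_ ?_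
      · intro k
        have hk : (0:ℝ) < (k:ℝ) + 1 := by positivity
        have := Nat.lt_floor_add_one ((σ ω - b0) * ((k:ℝ) + 1))
        simp only [τk, N]
        rw [h1]
        have h3 : σ ω - b0 < (⌊(σ ω - b0) * ((k:ℝ) + 1)⌋₊ + 1 : ℝ) / ((k:ℝ) + 1) := by
          rw [lt_div_iff₀ hk]; exact this
        rw [add_div] at h3
        linarith
      · intro k
        have hk : (0:ℝ) < (k:ℝ) + 1 := by positivity
        have := Nat.floor_le (a := (σ ω - b0) * ((k:ℝ) + 1)) (by positivity)
        simp only [τk, N]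
        rw [h1]
        have h3 : (⌊(σ ω - b0) * ((k:ℝ) + 1)⌋₊ : ℝ) / ((k:ℝ) + 1) ≤ σ ω - b0 := by
          rw [div_le_iff₀ hk]; exact this
        linarith
    have hcw := hω (τ ω) h2
    exact hcw.tendsto.comp (tendsto_nhdsWithin_iff.2 ⟨ht, Eventually.of_forall fun k => pt k _⟩)

theorem IntervalIntegrable.sub_Icc {E : Type*} [NormedAddCommGroup E] {h : ℝ → E} {s1 s2 r s : ℝ} (h12 : s1 ≤ s2)
    (hh : IntervalIntegrable h volume s1 s2) (hr : r ∈ Icc s1 s2) (hs : s ∈ Icc s1 s2) :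
    IntervalIntegrable h volume r s :=
  hh.mono_set (by rw [uIcc_of_le h12]; exact uIcc_subset_Icc hr hs)

theorem addlem {s1 s2 : ℝ} (h12 : s1 ≤ s2) {D h : ℝ → ℂ} {k : ℝ → ℝ}
    (hh : IntervalIntegrable h volume s1 s2) (hk : IntervalIntegrable k volume s1 s2)
    (H : ∀ η > 0, ∃ δ > 0, ∀ r ∈ Icc s1 s2, ∀ s ∈ Icc s1 s2, r ≤ s → s - r ≤ δ →
      ‖D s - D r - ∫ x in r..s, h x‖ ≤ η * ∫ x in r..s, k x) :
    D s2 - D s1 = ∫ x in s1..s2, h x := by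
  have main : ∀ η > 0, ‖D s2 - D s1 - ∫ x in s1..s2, h x‖ ≤ η * ∫ x in s1..s2, k x := by
    intro η hη
    obtain ⟨δ, hδ, hH⟩ := H η hη
    have step : ∀ N : ℕ, ∀ r ∈ Icc s1 s2, ∀ s ∈ Icc s1 s2, r ≤ s → s - r ≤ N * δ →
        ‖D s - D r - ∫ x in r..s, h x‖ ≤ η * ∫ x in r..s, k x := by
      intro N
      induction N with
      | zero =>
        intro r hr s hs hrs hd
        exact hH r hr s hs hrs (by simp at hd; linarith)
      | succ N ih =>
        intro r hr s hs hrs hd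
        rcases le_or_gt (s - r) δ with h1 | h1
        · exact hH r hr s hs hrs h1
        have hm : r + δ ∈ Icc s1 s2 := ⟨by linarith [hr.1], by linarith [hs.2]⟩
        have a1 := hH r hr (r + δ) hm (by linarith) (by linarith)
        have a2 := ih (r + δ) hm s hs (by linarith) (by push_cast at hd; linarith)
        have e1 := intervalIntegral.integral_add_adjacent_intervals (hh.sub_Icc h12 hr hm) (hh.sub_Icc h12 hm hs)
        have e2 := intervalIntegral.integral_add_adjacent_intervals (hk.sub_Icc h12 hr hm) (hk.sub_Icc h12 hm hs)
        rw [← e1, ← e2]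
        calc _ = ‖(D (r + δ) - D r - ∫ x in r..(r + δ), h x) + (D s - D (r + δ) - ∫ x in (r + δ)..s, h x)‖ := by
              congr 1; ring
          _ ≤ _ := norm_add_le _ _
          _ ≤ _ := by rw [mul_add]; exact add_le_add a1 a2
    obtain ⟨N, hN⟩ := exists_nat_ge ((s2 - s1) / δ)
    refine step N s1 (left_mem_Icc.2 h12) s2 (right_mem_Icc.2 h12) h12 ?_
    rwa [div_le_iff₀ hδ] at hN
  rw [← sub_eq_zero, ← norm_le_zero_iff]
  have ht : Tendsto (fun η : ℝ => η * ∫ x in s1..s2, k x) (𝓝[>] 0) (𝓝 0) := by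
    apply Tendsto.mono_left _ nhdsWithin_le_nhds
    have : Continuous (fun η : ℝ => η * ∫ x in s1..s2, k x) := by fun_prop
    simpa using this.tendsto 0
  exact ge_of_tendsto ht (eventually_nhdsWithin_of_forall fun η hη => main η hη)

theorem ac_cont {E : Type*} [NormedAddCommGroup E] [NormedSpace ℝ E] {s1 s2 : ℝ} (h12 : s1 ≤ s2) {b b' : ℝ → E}
    (hb' : IntervalIntegrable b' volume s1 s2)
    (hb : ∀ r ∈ Icc s1 s2, ∀ s ∈ Icc s1 s2, r ≤ s → b s - b r = ∫ x in r..s, b' x) :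
    ContinuousOn b (Icc s1 s2) := by
  have h := intervalIntegral.continuousOn_primitive_interval (f := b') (μ := volume) (a := s1) (b := s2)
    (by rw [uIcc_of_le h12]; exact (intervalIntegrable_iff_integrableOn_Icc_of_le h12).1 hb')
  rw [uIcc_of_le h12] at h
  refine (continuousOn_const.add h : ContinuousOn (fun s => b s1 + ∫ x in s1..s, b' x) _).congr ?_
  intro s hs
  show b s = b s1 + ∫ x in s1..s, b' x
  rw [← hb s1 (left_mem_Icc.2 h12) s hs hs.1]; abel

theorem chain {s1 s2 A B : ℝ} (h12 : s1 ≤ s2) {b b' : ℝ → ℝ} (hb' : IntervalIntegrable b' volume s1 s2)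
    (hb : ∀ r ∈ Icc s1 s2, ∀ s ∈ Icc s1 s2, r ≤ s → b s - b r = ∫ x in r..s, b' x)
    (hbJ : ∀ s ∈ Icc s1 s2, b s ∈ Icc A B) {H Hs Ht : ℝ → ℝ → ℂ}
    (h1 : ∀ t ∈ Icc A B, ∀ r ∈ Icc s1 s2, ∀ s ∈ Icc s1 s2, r ≤ s → H s t - H r t = ∫ σ in r..s, Hs σ t)
    (h1i : ∀ t ∈ Icc A B, IntervalIntegrable (fun σ => Hs σ t) volume s1 s2)
    {k : ℝ → ℝ} (hk : IntervalIntegrable k volume s1 s2)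
    (h2 : ∀ᵐ σ, σ ∈ Icc s1 s2 → ∀ t ∈ Icc A B, ∀ t' ∈ Icc A B, ‖Hs σ t - Hs σ t'‖ ≤ k σ * |t - t'|)
    (h3 : ∀ s ∈ Icc s1 s2, ∀ t ∈ Icc A B, HasDerivWithinAt (H s) (Ht s t) (Icc A B) t)
    (h4 : ContinuousOn (fun p : ℝ × ℝ => Ht p.1 p.2) (Icc s1 s2 ×ˢ Icc A B)) :
    IntervalIntegrable (fun σ => Hs σ (b σ)) volume s1 s2 ∧
    IntervalIntegrable (fun σ => (b' σ : ℂ) * Ht σ (b σ)) volume s1 s2 ∧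
    H s2 (b s2) - H s1 (b s1) = ∫ σ in s1..s2, (Hs σ (b σ) + (b' σ : ℂ) * Ht σ (b σ)) := by
  have hbc := ac_cont h12 hb' hb
  have hAB : A ≤ B := (hbJ s1 (left_mem_Icc.2 h12)).1.trans (hbJ s1 (left_mem_Icc.2 h12)).2
  have hAm : A ∈ Icc A B := left_mem_Icc.2 hAB
  have hΦc : ContinuousOn (fun σ => Ht σ (b σ)) (Icc s1 s2) :=
    h4.comp (f := fun σ => (σ, b σ)) (continuousOn_id.prodMk hbc) (fun σ hσ => ⟨hσ, hbJ σ hσ⟩)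
  have hI2 : IntervalIntegrable (fun σ => (b' σ : ℂ) * Ht σ (b σ)) volume s1 s2 := by
    refine IntervalIntegrable.mul_continuousOn ?_ (by rwa [uIcc_of_le h12])
    exact ⟨hb'.1.ofReal, hb'.2.ofReal⟩
  have h2' : ∀ᵐ σ ∂(volume.restrict (Ioc s1 s2)), σ ∈ Icc s1 s2 ∧ ∀ t ∈ Icc A B, ∀ t' ∈ Icc A B, ‖Hs σ t - Hs σ t'‖ ≤ k σ * |t - t'| := by
    refine (ae_restrict_iff' measurableSet_Ioc).2 ?_
    filter_upwards [h2] with σ h hσ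
    exact ⟨Ioc_subset_Icc_self hσ, h (Ioc_subset_Icc_self hσ)⟩
  have hI1 : IntervalIntegrable (fun σ => Hs σ (b σ)) volume s1 s2 := by
    rw [intervalIntegrable_iff_integrableOn_Ioc_of_le h12] at *
    have hc0 : ∀ t, max A (min t B) ∈ Icc A B := fun t => ⟨le_max_left _ _, max_le hAB (min_le_right _ _)⟩
    have hm := cara (μ := volume.restrict (Ioc s1 s2)) (b0 := A) (h := fun σ t => Hs σ (max A (min t B))) (τ := b) 
      (fun t _ => by
        have := h1i _ (hc0 t)
        rw [intervalIntegrable_iff_integrableOn_Ioc_of_le h12] at this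
        exact this.aestronglyMeasurable) ?_ ?_ ?_
    · refine Integrable.mono' (g := fun σ => ‖Hs σ A‖ + |k σ| * (B - A)) ?_ ?_ ?_
      · have := h1i A hAm
        rw [intervalIntegrable_iff_integrableOn_Ioc_of_le h12] at this
        exact this.norm.add (hk.norm.mul_const _)
      · refine hm.congr ?_
        filter_upwards [h2'] with σ hσ
        have := hbJ σ hσ.1
        rw [min_eq_left this.2, max_eq_right this.1]
      · filter_upwards [h2'] with σ hσ
        have hbσ := hbJ σ hσ.1
        have e1 := hσ.2 (b σ) hbσ A hAm
        have e2 := norm_le_norm_add_norm_sub' (Hs σ (b σ)) (Hs σ A)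
        have e3 : k σ * |b σ - A| ≤ |k σ| * (B - A) := by
          rw [abs_of_nonneg (by linarith [hbσ.1])]
          exact mul_le_mul (le_abs_self _) (by linarith [hbσ.2]) (by linarith [hbσ.1]) (abs_nonneg _)
        linarith
    · filter_upwards [h2'] with σ hσ
      have hl : LipschitzOnWith (Real.toNNReal |k σ|) (Hs σ) (Icc A B) := by
        refine LipschitzOnWith.of_dist_le_mul fun t ht t' ht' => ?_
        rw [dist_eq_norm, Real.dist_eq, Real.coe_toNNReal _ (abs_nonneg _)]
        refine (hσ.2 t ht t' ht').trans ?_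
        gcongr
        exact le_abs_self _
      refine hl.continuousOn.comp (by fun_prop) (fun t _ => hc0 t)
    · exact (hbc.mono Ioc_subset_Icc_self).aemeasurable measurableSet_Ioc
    · filter_upwards [h2'] with σ hσ using (hbJ σ hσ.1).1
  refine ⟨hI1, hI2, ?_⟩
  refine addlem (D := fun s => H s (b s)) (k := fun σ => |k σ| + 2 * |b' σ|) h12 (hI1.add hI2) (hk.abs.add (hb'.abs.const_mul 2)) ?_
  intro η hη
  have hu1 := (isCompact_Icc.prod isCompact_Icc).uniformContinuousOn_of_continuous h4
  obtain ⟨δ1, hδ1, hu1⟩ := Metric.uniformContinuousOn_iff.1 hu1 η hη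
  have hu2 := isCompact_Icc.uniformContinuousOn_of_continuous hbc
  obtain ⟨δ2, hδ2, hu2⟩ := Metric.uniformContinuousOn_iff.1 hu2 (min δ1 η) (by positivity)
  refine ⟨min δ1 δ2 / 2, by positivity, fun r hr s hs hrs hd => ?_⟩
  have hmin : 0 < min δ1 δ2 := by positivity
  have hδ1' : s - r < δ1 := by have := min_le_left δ1 δ2; linarith
  have hδ2' : s - r < δ2 := by have := min_le_right δ1 δ2; linarith
  have hsub : ∀ σ ∈ Icc r s, σ ∈ Icc s1 s2 := fun σ hσ => ⟨hr.1.trans hσ.1, hσ.2.trans hs.2⟩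
  have hbcl : ∀ σ ∈ Icc r s, ∀ σ' ∈ Icc r s, |b σ - b σ'| < min δ1 η := by
    intro σ hσ σ' hσ'
    have := hu2 σ (hsub σ hσ) σ' (hsub σ' hσ') (by
      rw [Real.dist_eq, abs_lt]; constructor <;> linarith [hσ.1, hσ.2, hσ'.1, hσ'.2])
    rwa [Real.dist_eq] at this
  have hrI : r ∈ Icc r s := left_mem_Icc.2 hrs
  have hsI : s ∈ Icc r s := right_mem_Icc.2 hrs
  -- integrability on sub interval
  have i1 := hI1.sub_Icc h12 hr hs
  have i2 := hI2.sub_Icc h12 hr hs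
  have i3 := (h1i (b s) (hbJ s hs)).sub_Icc h12 hr hs
  have i4 := hb'.sub_Icc h12 hr hs
  have i4c : IntervalIntegrable (fun σ => (b' σ : ℂ)) volume r s := ⟨i4.1.ofReal, i4.2.ofReal⟩
  have i5 := hk.sub_Icc h12 hr hs
  set c := Ht r (b r) with hc
  have E1 : ‖∫ σ in r..s, (Hs σ (b s) - Hs σ (b σ))‖ ≤ η * ∫ σ in r..s, |k σ| := by
    rw [← intervalIntegral.integral_const_mul]
    refine intervalIntegral.norm_integral_le_of_norm_le hrs ?_ (i5.abs.const_mul η)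
    filter_upwards [h2] with σ hσ hm
    have hm' := Ioc_subset_Icc_self hm
    refine (hσ (hsub σ hm') _ (hbJ s hs) _ (hbJ σ (hsub σ hm'))).trans ?_
    have e1 := (hbcl s hsI σ hm').le.trans (min_le_right _ _)
    calc k σ * |b s - b σ| ≤ |k σ| * η := mul_le_mul (le_abs_self _) e1 (abs_nonneg _) (abs_nonneg _)
      _ = _ := mul_comm _ _
  have E2 : ‖∫ σ in r..s, ((b' σ : ℂ) * c - (b' σ : ℂ) * Ht σ (b σ))‖ ≤ η * ∫ σ in r..s, |b' σ| := by
    rw [← intervalIntegral.integral_const_mul]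
    refine intervalIntegral.norm_integral_le_of_norm_le hrs ?_ (i4.abs.const_mul η)
    refine ae_of_all _ fun σ hm => ?_
    have hm' := Ioc_subset_Icc_self hm
    rw [← mul_sub, norm_mul, Complex.norm_real, Real.norm_eq_abs, mul_comm]
    have := hu1 (r, b r) ⟨hr, hbJ r hr⟩ (σ, b σ) ⟨hsub σ hm', hbJ σ (hsub σ hm')⟩ (by
      rw [Prod.dist_eq, max_lt_iff, Real.dist_eq, Real.dist_eq]
      refine ⟨?_, (hbcl r hrI σ hm').trans_le (min_le_left _ _)⟩
      rw [abs_lt]; constructor <;> linarith [hm'.1, hm'.2])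
    rw [dist_eq_norm] at this
    gcongr
  have hbs : |b s - b r| ≤ ∫ σ in r..s, |b' σ| := by
    rw [hb r hr s hs hrs]
    exact intervalIntegral.abs_integral_le_integral_abs hrs
  have E3 : ‖H r (b s) - H r (b r) - c * (b s - b r : ℝ)‖ ≤ η * |b s - b r| := by
    have hss : uIcc (b r) (b s) ⊆ Icc A B := uIcc_subset_Icc (hbJ r hr) (hbJ s hs)
    have := (convex_uIcc (b r) (b s)).norm_image_sub_le_of_norm_hasDerivWithin_le (C := η)
      (f := fun t => H r t - c * (t : ℂ)) (f' := fun t => Ht r t - c * ((1:ℝ):ℂ)) (fun t ht => 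
        ((h3 r hr t (hss ht)).mono hss).sub ((HasDerivAt.ofReal_comp (hasDerivAt_id t)).const_mul c).hasDerivWithinAt)
      (fun t ht => by
        have hd := hu1 (r, t) ⟨hr, hss ht⟩ (r, b r) ⟨hr, hbJ r hr⟩ (by
          rw [Prod.dist_eq, max_lt_iff, dist_self, Real.dist_eq]
          refine ⟨hδ1, ?_⟩
          have e1 := abs_sub_left_of_mem_uIcc ht
          have e2 := (hbcl s hsI r hrI).trans_le (min_le_left _ _)
          linarith)
        rw [dist_eq_norm] at hd
        simpa using hd.le) left_mem_uIcc right_mem_uIcc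
    rw [Real.norm_eq_abs] at this
    refine le_trans (le_of_eq ?_) this
    congr 1
    push_cast; ring
  have hsplit : H s (b s) - H r (b r) - ∫ σ in r..s, (Hs σ (b σ) + (b' σ : ℂ) * Ht σ (b σ)) =
      (∫ σ in r..s, (Hs σ (b s) - Hs σ (b σ))) + (H r (b s) - H r (b r) - c * (b s - b r : ℝ)) +
      ∫ σ in r..s, ((b' σ : ℂ) * c - (b' σ : ℂ) * Ht σ (b σ)) := by
    rw [intervalIntegral.integral_add i1 i2, intervalIntegral.integral_sub i3 i1,
      intervalIntegral.integral_sub (i4c.mul_const c) i2, ← h1 (b s) (hbJ s hs) r hr s hs hrs,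
      intervalIntegral.integral_mul_const, intervalIntegral.integral_ofReal, ← hb r hr s hs hrs]
    ring
  rw [hsplit, intervalIntegral.integral_add i5.abs (i4.abs.const_mul 2), intervalIntegral.integral_const_mul]
  have n1 := norm_add_le ((∫ σ in r..s, (Hs σ (b s) - Hs σ (b σ))) + (H r (b s) - H r (b r) - c * (b s - b r : ℝ))) (∫ σ in r..s, ((b' σ : ℂ) * c - (b' σ : ℂ) * Ht σ (b σ)))
  have n2 := norm_add_le (∫ σ in r..s, (Hs σ (b s) - Hs σ (b σ))) (H r (b s) - H r (b r) - c * (b s - b r : ℝ))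
  have n3 : η * |b s - b r| ≤ η * ∫ σ in r..s, |b' σ| := by gcongr
  linarith

structure Loc (b0 a0 a1 B γ C : ℝ) (n : ℕ) (a b a' b' : ℝ → ℝ) (f f' : ℝ → ℝ → ℂ) (s1 s2 : ℝ) : Prop where
  h12 : s1 < s2
  hb0 : 0 < b0
  ha0 : 0 < a0
  hC : 0 ≤ C
  hn1 : 1 ≤ n
  hn : γ + 2 - 2 * n < -1
  ia : IntervalIntegrable a' volume s1 s2
  ib : IntervalIntegrable b' volume s1 s2
  ja : ∀ r ∈ Icc s1 s2, ∀ s ∈ Icc s1 s2, r ≤ s → a s - a r = ∫ x in r..s, a' x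
  jb : ∀ r ∈ Icc s1 s2, ∀ s ∈ Icc s1 s2, r ≤ s → b s - b r = ∫ x in r..s, b' x
  jf : ∀ y, b0 ≤ y → IntervalIntegrable (fun s => f' s y) volume s1 s2
  kf : ∀ y, b0 ≤ y → ∀ r ∈ Icc s1 s2, ∀ s ∈ Icc s1 s2, r ≤ s → f s y - f r y = ∫ x in r..s, f' x y
  ab : ∀ s ∈ Icc s1 s2, a0 ≤ |a s| ∧ |a s| ≤ a1
  bb : ∀ s ∈ Icc s1 s2, b s ∈ Icc b0 B
  gf : ∀ᵐ s, s ∈ Icc s1 s2 → GF b0 n γ C (fun _ _ => f s) (f s) ∧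
    GF b0 n (γ + 2) C (fun _ _ y => (y:ℂ) ^ 2 * f s y) (fun y => (y:ℂ) ^ 2 * f s y) ∧
    GF b0 n (γ + 2) C (fun _ _ => f' s) (f' s)

theorem loc_bdd {N : ℝ → ℝ} {I : Set ℝ} (h : ∀ s ∈ I, ∃ M : ℝ, ∀ᶠ u in 𝓝[I] s, N u ≤ M)
    {K : Set ℝ} (hK : IsCompact K) (hKI : K ⊆ I) : ∃ M, ∀ u ∈ K, N u ≤ M := by
  refine hK.induction_on (p := fun S => ∃ M, ∀ u ∈ S, N u ≤ M) ⟨0, by simp⟩ ?_ ?_ ?_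
  · rintro S T hST ⟨M, hM⟩; exact ⟨M, fun u hu => hM u (hST hu)⟩
  · rintro S T ⟨M, hM⟩ ⟨M', hM'⟩
    exact ⟨max M M', fun u hu => hu.elim (fun h => (hM u h).trans (le_max_left _ _))
      (fun h => (hM' u h).trans (le_max_right _ _))⟩
  · intro s hs
    obtain ⟨M, hM⟩ := h s (hKI hs)
    exact ⟨_, nhdsWithin_mono _ hKI hM, M, fun u hu => hu⟩

theorem ac_ext {E : Type*} [NormedAddCommGroup E] [NormedSpace ℝ E] {I : Set ℝ} {g h : ℝ → E} {s1 s2 : ℝ}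
    (hK : Icc s1 s2 ⊆ I) (h0 : ∀ s₁ ∈ I, ∀ s₂ ∈ I, s₁ < s₂ → g s₂ - g s₁ = ∫ s in s₁..s₂, h s) :
    ∀ r ∈ Icc s1 s2, ∀ s ∈ Icc s1 s2, r ≤ s → g s - g r = ∫ x in r..s, h x := by
  intro r hr s hs hrs
  rcases hrs.eq_or_lt with rfl | hlt
  · simp
  · exact h0 r (hK hr) s (hK hs) hlt

theorem Loc.mk' (I : Set ℝ) (hIc : I.OrdConnected)
    (a b a' b' : ℝ → ℝ) (b₀ : ℝ) (hb₀ : 0 < b₀)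
    (haAC : MeasureTheory.LocallyIntegrableOn a' I ∧
      ∀ s₁ ∈ I, ∀ s₂ ∈ I, s₁ < s₂ → a s₂ - a s₁ = ∫ s in s₁..s₂, a' s)
    (hbAC : MeasureTheory.LocallyIntegrableOn b' I ∧
      ∀ s₁ ∈ I, ∀ s₂ ∈ I, s₁ < s₂ → b s₂ - b s₁ = ∫ s in s₁..s₂, b' s)
    (hane : ∀ s ∈ I, a s ≠ 0) (hbge : ∀ s ∈ I, b₀ ≤ b s)
    (f f' : ℝ → ℝ → ℂ)
    (hfAC : ∀ y ∈ Set.Ici b₀, MeasureTheory.LocallyIntegrableOn (fun s => f' s y) I ∧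
      ∀ s₁ ∈ I, ∀ s₂ ∈ I, s₁ < s₂ → f s₂ y - f s₁ y = ∫ s in s₁..s₂, f' s y)
    (n : ℕ) (α : ℝ) (hα : 0 ≤ α) (hn : α + 3 < n)
    (hreg : ∀ᵐ s ∂(MeasureTheory.volume : MeasureTheory.Measure ℝ), s ∈ I →
      MemCnAlpha b₀ n α (f s) ∧ MemCnAlpha b₀ n (α + 2) (f' s))
    (hbd1 : ∀ s ∈ I, ∃ M : ℝ, ∀ᶠ u in 𝓝[I] s, CnAlphaNorm b₀ n α (f u) ≤ M)
    (hbd2 : ∀ s ∈ I, ∃ M : ℝ, ∀ᶠ u in 𝓝[I] s, CnAlphaNorm b₀ n (α + 2) (f' u) ≤ M)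
    (s1 s2 : ℝ) (h1 : s1 ∈ I) (h2 : s2 ∈ I) (h12 : s1 < s2) :
    ∃ a0 a1 B C, Loc b₀ a0 a1 B (n + α) C n a b a' b' f f' s1 s2 := by
  have hK : Icc s1 s2 ⊆ I := hIc.out h1 h2
  have hne : (Icc s1 s2).Nonempty := ⟨s1, left_mem_Icc.2 h12.le⟩
  have ii : ∀ {E : Type} [NormedAddCommGroup E] {h : ℝ → E}, LocallyIntegrableOn h I → IntervalIntegrable h volume s1 s2 :=
    fun h => (intervalIntegrable_iff_integrableOn_Icc_of_le h12.le).2 (h.integrableOn_compact_subset hK isCompact_Icc)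
  have ca := ac_cont h12.le (ii haAC.1) (ac_ext hK haAC.2)
  have cb := ac_cont h12.le (ii hbAC.1) (ac_ext hK hbAC.2)
  obtain ⟨sm, hsm, hmin⟩ := isCompact_Icc.exists_isMinOn hne ca.abs
  obtain ⟨sM, hsM, hmax⟩ := isCompact_Icc.exists_isMaxOn hne ca.abs
  obtain ⟨sB, hsB, hmaxB⟩ := isCompact_Icc.exists_isMaxOn hne cb
  obtain ⟨M1, hM1⟩ := loc_bdd hbd1 isCompact_Icc hK
  obtain ⟨M2, hM2⟩ := loc_bdd hbd2 isCompact_Icc hK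
  have hM1' := abs_nonneg M1
  have hM2' := abs_nonneg M2
  set C1 := ((n:ℝ) + 1) * |M1|
  set C2 := ((n:ℝ) + 1) * |M2|
  have hC1 : 0 ≤ C1 := by positivity
  have hC2 : 0 ≤ C2 := by positivity
  have hC3 : 0 ≤ (2:ℝ) ^ n * (2 ^ n * 1 * 1) * C1 := by positivity
  refine ⟨|a sm|, |a sM|, b sB, C1 + C2 + 2 ^ n * (2 ^ n * 1 * 1) * C1, h12, hb₀, abs_pos.2 (hane _ (hK hsm)), by positivity, ?_, ?_, ii haAC.1, ii hbAC.1, ac_ext hK haAC.2, ac_ext hK hbAC.2, fun y hy => ii (hfAC y hy).1, fun y hy => ac_ext hK (hfAC y hy).2, fun s hs => ⟨hmin hs, hmax hs⟩, fun s hs => ⟨hbge s (hK hs), hmaxB hs⟩, ?_⟩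
  · have : (0:ℝ) < n := by linarith
    exact_mod_cast this
  · linarith
  · filter_upwards [hreg] with s hs hsK
    obtain ⟨g1, g2⟩ := hs (hK hsK)
    obtain ⟨_, k1⟩ := memGF hb₀ hα g1 ((hM1 s hsK).trans (le_abs_self M1))
    obtain ⟨_, k2⟩ := memGF hb₀ (by linarith) g2 ((hM2 s hsK).trans (le_abs_self M2))
    refine ⟨k1.mono hb₀ (by linarith), (GF.ysq hb₀ hC1 k1).mono hb₀ (by linarith), ?_⟩
    rw [show (n:ℝ) + α + 2 = n + (α + 2) by ring]
    exact k2.mono hb₀ (by linarith)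

section
variable {b0 a0 a1 B γ C : ℝ} {n : ℕ} {a b a' b' : ℝ → ℝ} {f f' : ℝ → ℝ → ℂ} {s1 s2 : ℝ}

theorem Loc.sub (h : Loc b0 a0 a1 B γ C n a b a' b' f f' s1 s2) {r s : ℝ} (hr : r ∈ Icc s1 s2) (hs : s ∈ Icc s1 s2)
    (hrs : r < s) : Loc b0 a0 a1 B γ C n a b a' b' f f' r s := by
  have hsub : Icc r s ⊆ Icc s1 s2 := Icc_subset_Icc hr.1 hs.2
  refine ⟨hrs, h.hb0, h.ha0, h.hC, h.hn1, h.hn, h.ia.sub_Icc h.h12.le hr hs, h.ib.sub_Icc h.h12.le hr hs,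
    fun u hu v hv => h.ja u (hsub hu) v (hsub hv), fun u hu v hv => h.jb u (hsub hu) v (hsub hv),
    fun y hy => (h.jf y hy).sub_Icc h.h12.le hr hs, fun y hy u hu v hv => h.kf y hy u (hsub hu) v (hsub hv),
    fun u hu => h.ab u (hsub hu), fun u hu => h.bb u (hsub hu), ?_⟩
  filter_upwards [h.gf] with u hu hu' using hu (hsub hu')

theorem ae_le_Icc {s1 s2 : ℝ} (h12 : s1 < s2) {φ ψ : ℝ → ℝ} (hφ : ContinuousOn φ (Icc s1 s2)) (hψ : ContinuousOn ψ (Icc s1 s2))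
    (h : ∀ᵐ s, s ∈ Icc s1 s2 → φ s ≤ ψ s) : ∀ s ∈ Icc s1 s2, φ s ≤ ψ s := by
  have h1 : EqOn (fun s => max (φ s) (ψ s)) ψ (Icc s1 s2) := by
    refine Measure.eqOn_Icc_of_ae_eq (volume : Measure ℝ) h12.ne ?_ (fun x hx => Filter.Tendsto.max (hφ x hx) (hψ x hx)) hψ
    refine (ae_restrict_iff' measurableSet_Icc).2 ?_
    filter_upwards [h] with s hs hs' using max_eq_right (hs hs')
  intro s hs
  have := h1 hs
  simp only at this
  rw [← this]; exact le_max_left _ _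

theorem Loc.fc (h : Loc b0 a0 a1 B γ C n a b a' b' f f' s1 s2) {y : ℝ} (hy : b0 ≤ y) :
    ContinuousOn (fun s => f s y) (Icc s1 s2) := ac_cont h.h12.le (h.jf y hy) (h.kf y hy)

theorem Loc.fb (h : Loc b0 a0 a1 B γ C n a b a' b' f f' s1 s2) :
    ∀ s ∈ Icc s1 s2, ∀ y, b0 ≤ y → ‖f s y‖ ≤ C * y ^ γ := by
  intro s hs y hy
  refine ae_le_Icc h.h12 (h.fc hy).norm continuousOn_const ?_ s hs
  filter_upwards [h.gf] with u hu hu'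
  exact ((hu hu').1.base.1 0 1 (by simp)).2 y hy

theorem Loc.flip (h : Loc b0 a0 a1 B γ C n a b a' b' f f' s1 s2) (Y : ℝ) :
    ∃ D, 0 ≤ D ∧ ∀ s ∈ Icc s1 s2, ∀ y ∈ Icc b0 Y, ∀ z ∈ Icc b0 Y, ‖f s y - f s z‖ ≤ D * |y - z| := by
  obtain ⟨D, hD⟩ := (isCompact_Icc (a := b0) (b := Y)).exists_bound_of_continuousOn (f := fun y : ℝ => C * y ^ (γ - 1))
    (fun y hy => (continuousAt_const.mul (Real.continuousAt_rpow_const _ _ (Or.inl (by have := hy.1; have := h.hb0; linarith)))).continuousWithinAt)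
  refine ⟨|D|, abs_nonneg _, fun s hs y hy z hz => ?_⟩
  refine ae_le_Icc h.h12 (ContinuousOn.norm ((h.fc hy.1).sub (h.fc hz.1))) continuousOn_const ?_ s hs
  filter_upwards [h.gf] with u hu hu'
  obtain ⟨m, rfl⟩ : ∃ m, n = m + 1 := ⟨n - 1, by have := h.hn1; omega⟩
  obtain ⟨_, F', F0', hd, hg⟩ := (hu hu').1
  have := (convex_Icc b0 Y).norm_image_sub_le_of_norm_hasDerivWithin_le (f := f u) (f' := F' 0 1) (C := |D|) (s := Icc b0 Y)
    (fun x hx => (hd 0 1 (by simp) x hx.1).mono (fun w hw => hw.1))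
    (fun x hx => ((hg.base.1 0 1 (by simp)).2 x hx.1).trans ((le_abs_self _).trans ((hD x hx).trans (le_abs_self _)))) hz hy
  simpa using this

theorem Loc.fj (h : Loc b0 a0 a1 B γ C n a b a' b' f f' s1 s2) (Y : ℝ) :
    ContinuousOn (fun p : ℝ × ℝ => f p.1 p.2) (Icc s1 s2 ×ˢ Icc b0 Y) := by
  obtain ⟨D, hD, hl⟩ := h.flip Y
  refine continuousOn_prod_of_continuousOn_lipschitzOnWith' (fun p : ℝ × ℝ => f p.1 p.2) ⟨D, hD⟩ ?_ ?_
  · intro s hs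
    refine LipschitzOnWith.of_dist_le_mul fun y hy z hz => ?_
    rw [dist_eq_norm, Real.dist_eq]
    exact hl s hs y hy z hz
  · intro y hy
    exact h.fc hy.1

theorem Loc.fy (h : Loc b0 a0 a1 B γ C n a b a' b' f f' s1 s2) {s : ℝ} (hs : s ∈ Icc s1 s2) :
    ContinuousOn (f s) (Ici b0) := by
  intro y hy
  have h1 : ContinuousOn (f s) (Icc b0 (y+1)) :=
    (h.fj (y+1)).comp (f := fun y => (s, y)) (by fun_prop) (fun z hz => ⟨hs, hz⟩)
  refine (h1 y ⟨hy, by linarith⟩).mono_of_mem_nhdsWithin ?_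
  rw [← Ici_inter_Iic]
  exact inter_mem self_mem_nhdsWithin (mem_nhdsWithin_of_mem_nhds (Iic_mem_nhds (by linarith)))

theorem Loc.meas (h : Loc b0 a0 a1 B γ C n a b a' b' f f' s1 s2) {t : ℝ} (ht : b0 ≤ t) :
    AEStronglyMeasurable (fun p : ℝ × ℝ => f' p.1 p.2) ((volume.restrict (Icc s1 s2)).prod (volume.restrict (Ioi t))) := by
  refine cara (b0 := b0) (h := fun p : ℝ × ℝ => f' p.1) (τ := Prod.snd) ?_ ?_ measurable_snd.aemeasurable ?_
  · intro y hy
    exact (((intervalIntegrable_iff_integrableOn_Icc_of_le h.h12.le).1 (h.jf y hy)).1).comp_fst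
  · refine Measure.quasiMeasurePreserving_fst.ae (p := fun s => ContinuousOn (f' s) (Ici b0)) ?_
    refine (ae_restrict_iff' measurableSet_Icc).2 ?_
    filter_upwards [h.gf] with u hu hu'
    exact ((hu hu').2.2.base.1 0 1 (by simp)).1
  · refine Measure.quasiMeasurePreserving_snd.ae (p := fun y => b0 ≤ y) ?_
    refine (ae_restrict_iff' measurableSet_Ioi).2 (ae_of_all _ fun y hy => ht.trans (le_of_lt hy))

theorem Loc.measf (h : Loc b0 a0 a1 B γ C n a b a' b' f f' s1 s2) {t : ℝ} (ht : b0 ≤ t) :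
    AEStronglyMeasurable (fun p : ℝ × ℝ => f p.1 p.2) ((volume.restrict (Icc s1 s2)).prod (volume.restrict (Ioi t))) := by
  refine cara (b0 := b0) (h := fun p : ℝ × ℝ => f p.1) (τ := Prod.snd) ?_ ?_ measurable_snd.aemeasurable ?_
  · intro y hy
    exact ((h.fc hy).aestronglyMeasurable measurableSet_Icc).comp_fst
  · refine Measure.quasiMeasurePreserving_fst.ae (p := fun s => ContinuousOn (f s) (Ici b0)) ?_
    exact (ae_restrict_iff' measurableSet_Icc).2 (ae_of_all _ fun u hu => h.fy hu)
  · refine Measure.quasiMeasurePreserving_snd.ae (p := fun y => b0 ≤ y) ?_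
    refine (ae_restrict_iff' measurableSet_Ioi).2 (ae_of_all _ fun y hy => ht.trans (le_of_lt hy))
end

def Fs (a a' : ℝ → ℝ) (f f' : ℝ → ℝ → ℂ) (y0 ε σ y : ℝ) : ℂ :=
  ww (a σ) y0 ε y * (Complex.I * a' σ * ((y:ℂ) ^ 2 * f σ y) + f' σ y)

theorem ww_da (y0 ε y a : ℝ) : HasDerivAt (fun a : ℝ => ww a y0 ε y) (ww a y0 ε y * (Complex.I * (y:ℂ)^2)) a := by
  have h : HasDerivAt (fun y : ℝ => (y:ℂ)) 1 a := by
    exact_mod_cast (HasDerivAt.ofReal_comp (hasDerivAt_id a))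
  have h1 := (((h.const_mul Complex.I).mul_const ((y:ℂ)^2)).cexp).const_mul (Complex.exp (-(ε : ℂ) * (y - y0) ^ 2))
  have e : ww a y0 ε y * (Complex.I * (y:ℂ)^2) = Complex.exp (-(ε : ℂ) * (y - y0) ^ 2) * (Complex.exp (Complex.I * a * y ^ 2) * (Complex.I * 1 * y ^ 2)) := by
    unfold ww; ring
  rw [e]; exact h1

theorem ww_cont2 (y0 ε : ℝ) : Continuous (fun q : ℝ × ℝ => ww q.1 y0 ε q.2) := by
  unfold ww; fun_prop

theorem ww_lip {y0 ε y : ℝ} (hε : 0 ≤ ε) (t t' : ℝ) : ‖ww t y0 ε y - ww t' y0 ε y‖ ≤ y^2 * |t - t'| := by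
  have := (convex_univ (𝕜 := ℝ) (E := ℝ)).norm_image_sub_le_of_norm_hasDerivWithin_le (f := fun a : ℝ => ww a y0 ε y)
    (C := y^2) (fun x _ => (ww_da y0 ε y x).hasDerivWithinAt) (fun x _ => ?_) (mem_univ t') (mem_univ t)
  · simpa using this
  · rw [norm_mul]
    have : ‖Complex.I * (y:ℂ)^2‖ = y^2 := by simp
    rw [this]
    have := norm_ww_le (a := x) (y0 := y0) (y := y) hε
    nlinarith [sq_nonneg y]

section
variable {b0 a0 a1 B γ C : ℝ} {n : ℕ} {a b a' b' : ℝ → ℝ} {f f' : ℝ → ℝ → ℂ} {s1 s2 : ℝ}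

theorem Loc.ac (h : Loc b0 a0 a1 B γ C n a b a' b' f f' s1 s2) : ContinuousOn a (Icc s1 s2) :=
  ac_cont h.h12.le h.ia h.ja

theorem Loc.bc (h : Loc b0 a0 a1 B γ C n a b a' b' f f' s1 s2) : ContinuousOn b (Icc s1 s2) :=
  ac_cont h.h12.le h.ib h.jb

theorem Loc.pt (h : Loc b0 a0 a1 B γ C n a b a' b' f f' s1 s2) {y : ℝ} (hy : b0 ≤ y) (y0 : ℝ) {ε : ℝ} (hε : 0 ≤ ε) :
    ww (a s2) y0 ε y * f s2 y - ww (a s1) y0 ε y * f s1 y = ∫ σ in s1..s2, Fs a a' f f' y0 ε σ y := by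
  have hc := chain (A := -a1) (B := a1) h.h12.le h.ia h.ja (fun s hs => abs_le.1 (h.ab s hs).2)
    (H := fun s t => ww t y0 ε y * f s y) (Hs := fun s t => ww t y0 ε y * f' s y)
    (Ht := fun s t => ww t y0 ε y * (Complex.I * (y:ℂ)^2) * f s y) (k := fun σ => y^2 * ‖f' σ y‖) ?_ ?_ ?_ ?_ ?_ ?_
  · rw [hc.2.2]
    refine intervalIntegral.integral_congr fun σ _ => ?_
    simp only [Fs]; ring
  · intro t _ r hr s hs hrs
    rw [← mul_sub, h.kf y hy r hr s hs hrs, intervalIntegral.integral_const_mul]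
  · intro t _
    exact (h.jf y hy).const_mul _
  · exact (h.jf y hy).norm.const_mul _
  · refine ae_of_all _ fun σ _ t _ t' _ => ?_
    rw [← sub_mul, norm_mul]
    have := ww_lip (y0 := y0) (y := y) hε t t'
    nlinarith [norm_nonneg (f' σ y)]
  · intro s hs t ht
    exact ((ww_da y0 ε y t).mul_const (f s y)).hasDerivWithinAt
  · refine ContinuousOn.mul (Continuous.continuousOn ?_) ?_
    · exact ((ww_cont2 y0 ε).comp (continuous_snd.prodMk continuous_const)).mul continuous_const
    · exact (h.fc hy).comp continuousOn_fst (fun p hp => hp.1)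

theorem Loc.bd (h : Loc b0 a0 a1 B γ C n a b a' b' f f' s1 s2) (y0 : ℝ) {ε : ℝ} (hε : 0 < ε) :
    ∃ K, 0 ≤ K ∧ ∀ᵐ σ, σ ∈ Icc s1 s2 → ContinuousOn (Fs a a' f f' y0 ε σ) (Ici b0) ∧
      ∀ y, b0 ≤ y → ‖Fs a a' f f' y0 ε σ y‖ ≤ (|a' σ| + 1) * (K * y ^ (-2:ℝ)) := by
  obtain ⟨K, hK, hb⟩ := ww_bound h.hb0 (γ + 2) C ε y0 hε h.hC
  refine ⟨K, hK, ?_⟩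
  filter_upwards [h.gf] with σ hσ hσ'
  obtain ⟨_, g1, g2⟩ := hσ hσ'
  have c1 := g1.base.1 0 1 (by simp)
  have c2 := g2.base.1 0 1 (by simp)
  refine ⟨?_, fun y hy => ?_⟩
  · exact (continuous_ww _ _ _).continuousOn.mul ((continuousOn_const.mul c1.1).add c2.1)
  · have k1 := hb (a σ) y hy _ (c1.2 y hy)
    have k2 := hb (a σ) y hy _ (c2.2 y hy)
    have e : Fs a a' f f' y0 ε σ y = Complex.I * a' σ * (ww (a σ) y0 ε y * ((y:ℂ)^2 * f σ y)) + ww (a σ) y0 ε y * f' σ y := by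
      unfold Fs; ring
    rw [e]
    refine (norm_add_le _ _).trans ?_
    rw [norm_mul]
    have : ‖Complex.I * (a' σ : ℂ)‖ = |a' σ| := by simp
    rw [this]
    have := mul_le_mul_of_nonneg_left k1 (abs_nonneg (a' σ))
    linarith

theorem Loc.fub (h : Loc b0 a0 a1 B γ C n a b a' b' f f' s1 s2) (y0 : ℝ) {ε : ℝ} (hε : 0 < ε) {t : ℝ} (ht : b0 ≤ t) :
    IntervalIntegrable (fun σ => ∫ y in Ioi t, Fs a a' f f' y0 ε σ y) volume s1 s2 ∧
    (∫ y in Ioi t, ww (a s2) y0 ε y * f s2 y) - (∫ y in Ioi t, ww (a s1) y0 ε y * f s1 y) =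
      ∫ σ in s1..s2, ∫ y in Ioi t, Fs a a' f f' y0 ε σ y := by
  obtain ⟨K, hK, hb⟩ := h.bd y0 hε
  have hint : Integrable (fun p : ℝ × ℝ => Fs a a' f f' y0 ε p.1 p.2) ((volume.restrict (Icc s1 s2)).prod (volume.restrict (Ioi t))) := by
    have ia := (intervalIntegrable_iff_integrableOn_Icc_of_le h.h12.le).1 h.ia
    have i1 : Integrable (fun σ => |a' σ| + 1) (volume.restrict (Icc s1 s2)) := ia.abs.add (integrable_const _)
    refine Integrable.mono' (i1.mul_prod (integrableOn_m2 (by linarith [h.hb0]) K)) ?_ ?_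
    · refine AEStronglyMeasurable.mul ?_ (AEStronglyMeasurable.add (AEStronglyMeasurable.mul ?_ (AEStronglyMeasurable.mul ?_ (h.measf ht))) (h.meas ht))
      · have m1 : AEStronglyMeasurable (fun p : ℝ × ℝ => a p.1) ((volume.restrict (Icc s1 s2)).prod (volume.restrict (Ioi t))) :=
          (h.ac.aestronglyMeasurable measurableSet_Icc).comp_fst
        exact (ww_cont2 y0 ε).comp_aestronglyMeasurable (m1.prodMk measurable_snd.aestronglyMeasurable)
      · have m1 : AEStronglyMeasurable (fun p : ℝ × ℝ => a' p.1) ((volume.restrict (Icc s1 s2)).prod (volume.restrict (Ioi t))) :=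
          ia.1.comp_fst
        exact aestronglyMeasurable_const.mul (Complex.continuous_ofReal.comp_aestronglyMeasurable m1)
      · exact Continuous.aestronglyMeasurable (by fun_prop)
    · have e1 := Measure.quasiMeasurePreserving_fst (μ := volume.restrict (Icc s1 s2)) (ν := volume.restrict (Ioi t)) |>.ae
        ((ae_restrict_iff' measurableSet_Icc).2 hb)
      have e2 := Measure.quasiMeasurePreserving_snd (μ := volume.restrict (Icc s1 s2)) (ν := volume.restrict (Ioi t)) |>.ae
        ((ae_restrict_iff' measurableSet_Ioi).2 (ae_of_all volume fun y (hy : y ∈ Ioi t) => ht.trans (le_of_lt hy)))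
      filter_upwards [e1, e2] with p hp1 hp2 using hp1.2 _ hp2
  have hfi : ∀ s ∈ Icc s1 s2, IntegrableOn (fun y => ww (a s) y0 ε y * f s y) (Ioi t) := fun s hs =>
    ww_integrable h.hb0 hε h.hC ht (h.fy hs) (h.fb s hs)
  refine ⟨(intervalIntegrable_iff_integrableOn_Icc_of_le h.h12.le).2 hint.integral_prod_left, ?_⟩
  rw [← integral_sub (hfi s2 (right_mem_Icc.2 h.h12.le)) (hfi s1 (left_mem_Icc.2 h.h12.le)),
    intervalIntegral.integral_of_le h.h12.le, ← integral_Icc_eq_integral_Ioc,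
    integral_integral_swap (f := fun σ y => Fs a a' f f' y0 ε σ y) hint]
  refine setIntegral_congr_fun measurableSet_Ioi fun y hy => ?_
  rw [h.pt (ht.trans (le_of_lt hy)) y0 hε.le, intervalIntegral.integral_of_le h.h12.le, ← integral_Icc_eq_integral_Ioc]

def Pe (a b : ℝ → ℝ) (f : ℝ → ℝ → ℂ) (y0 ε s : ℝ) : ℂ := ∫ y in Ioi (b s), ww (a s) y0 ε y * f s y

def ge (a b a' b' : ℝ → ℝ) (f f' : ℝ → ℝ → ℂ) (y0 ε σ : ℝ) : ℂ :=
  (∫ y in Ioi (b σ), Fs a a' f f' y0 ε σ y) + b' σ * (-(ww (a σ) y0 ε (b σ) * f σ (b σ)))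

theorem Ioi_sub {t t' : ℝ} {F : ℝ → ℂ} (h1 : IntegrableOn F (Ioi t)) (h2 : IntegrableOn F (Ioi t')) :
    (∫ y in Ioi t, F y) - ∫ y in Ioi t', F y = ∫ y in t..t', F y :=
  intervalIntegral.integral_Ioi_sub_Ioi' h1 h2

theorem Loc.main (h : Loc b0 a0 a1 B γ C n a b a' b' f f' s1 s2) (y0 : ℝ) {ε : ℝ} (hε : 0 < ε) :
    IntervalIntegrable (ge a b a' b' f f' y0 ε) volume s1 s2 ∧
    Pe a b f y0 ε s2 - Pe a b f y0 ε s1 = ∫ σ in s1..s2, ge a b a' b' f f' y0 ε σ := by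
  obtain ⟨K, hK, hb⟩ := h.bd y0 hε
  have hfi : ∀ s ∈ Icc s1 s2, ∀ t, b0 ≤ t → IntegrableOn (fun y => ww (a s) y0 ε y * f s y) (Ioi t) := fun s hs t ht =>
    ww_integrable h.hb0 hε h.hC ht (h.fy hs) (h.fb s hs)
  have hc := chain (A := b0) (B := B) h.h12.le h.ib h.jb h.bb
    (H := fun s t => ∫ y in Ioi t, ww (a s) y0 ε y * f s y) (Hs := fun s t => ∫ y in Ioi t, Fs a a' f f' y0 ε s y)
    (Ht := fun s t => -(ww (a s) y0 ε t * f s t)) (k := fun σ => (|a' σ| + 1) * (K * b0 ^ (-2:ℝ))) ?_ ?_ ?_ ?_ ?_ ?_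
  · exact ⟨hc.1.add hc.2.1, hc.2.2⟩
  · intro t ht r hr s hs hrs
    rcases hrs.eq_or_lt with rfl | hlt
    · simp
    · exact ((h.sub hr hs hlt).fub y0 hε ht.1).2
  · intro t ht
    exact (h.fub y0 hε ht.1).1
  · exact (h.ia.abs.add intervalIntegrable_const).mul_const _
  · filter_upwards [hb] with σ hσ hσ' t ht t' ht'
    obtain ⟨hc, hbd⟩ := hσ hσ'
    have hi : ∀ t, b0 ≤ t → IntegrableOn (Fs a a' f f' y0 ε σ) (Ioi t) := by
      intro t ht
      refine Integrable.mono' ((integrableOn_m2 (by linarith [h.hb0] : 0 < t) K).const_mul (|a' σ| + 1)) ?_ ?_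
      · exact (hc.mono (fun y hy => ht.trans (le_of_lt hy))).aestronglyMeasurable measurableSet_Ioi
      · exact (ae_restrict_iff' measurableSet_Ioi).2 (ae_of_all _ fun y hy => hbd y (ht.trans (le_of_lt hy)))
    rw [Ioi_sub (hi t ht.1) (hi t' ht'.1), abs_sub_comm]
    refine intervalIntegral.norm_integral_le_of_norm_le_const fun y hy => ?_
    have hy' : b0 ≤ y := (le_min ht.1 ht'.1).trans (le_of_lt hy.1)
    refine (hbd y hy').trans ?_
    have : y ^ (-2:ℝ) ≤ b0 ^ (-2:ℝ) := Real.rpow_le_rpow_of_nonpos h.hb0 hy' (by norm_num)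
    gcongr
  · intro s hs t ht
    have hcF : ContinuousOn (fun y => ww (a s) y0 ε y * f s y) (Icc b0 B) :=
      (continuous_ww _ _ _).continuousOn.mul ((h.fy hs).mono fun y hy => hy.1)
    have : Fact (t ∈ Icc b0 B) := ⟨ht⟩
    have hsub : uIcc b0 t ⊆ Icc b0 B := by
      rw [uIcc_of_le ht.1]; exact Icc_subset_Icc_right ht.2
    have hd : HasDerivWithinAt (fun u => ∫ y in b0..u, ww (a s) y0 ε y * f s y) (ww (a s) y0 ε t * f s t) (Icc b0 B) t :=
      intervalIntegral.integral_hasDerivWithinAt_right ((hcF.mono hsub).intervalIntegrable)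
        (hcF.stronglyMeasurableAtFilter_nhdsWithin measurableSet_Icc t) (hcF t ht)
    refine (hd.const_sub (∫ y in Ioi b0, ww (a s) y0 ε y * f s y)).congr_of_mem ?_ ht
    intro u hu
    rw [← Ioi_sub (hfi s hs b0 le_rfl) (hfi s hs u hu.1)]
    ring
  · refine ContinuousOn.neg (ContinuousOn.mul ?_ (h.fj B))
    exact (ww_cont2 y0 ε).comp_continuousOn (f := fun p : ℝ × ℝ => (a p.1, p.2))
      ((h.ac.comp continuousOn_fst (fun p hp => hp.1)).prodMk continuousOn_snd)
end

open Classical in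
def Psi (a b : ℝ → ℝ) (f : ℝ → ℝ → ℂ) (s : ℝ) : ℂ :=
  if h : ∃ L, ∀ y0, Tendsto (fun ε => Pe a b f y0 ε s) (𝓝[>] 0) (𝓝 L) then h.choose else 0

open Classical in
def Gl (a b a' : ℝ → ℝ) (f f' : ℝ → ℝ → ℂ) (σ : ℝ) : ℂ :=
  if h : ∃ L, ∀ y0, Tendsto (fun ε => ∫ y in Ioi (b σ), Fs a a' f f' y0 ε σ y) (𝓝[>] 0) (𝓝 L) then h.choose else 0

def gg (a b a' b' : ℝ → ℝ) (f f' : ℝ → ℝ → ℂ) (σ : ℝ) : ℂ :=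
  Gl a b a' f f' σ + b' σ * (-(Complex.exp (Complex.I * a σ * (b σ) ^ 2) * f σ (b σ)))

theorem Psi_spec {a b : ℝ → ℝ} {f : ℝ → ℝ → ℂ} {s : ℝ}
    (h : ∃ L, ∀ y0, Tendsto (fun ε => Pe a b f y0 ε s) (𝓝[>] 0) (𝓝 L)) (y0 : ℝ) :
    Tendsto (fun ε => Pe a b f y0 ε s) (𝓝[>] 0) (𝓝 (Psi a b f s)) := by
  unfold Psi; rw [dif_pos h]; exact h.choose_spec y0

theorem Gl_spec {a b a' : ℝ → ℝ} {f f' : ℝ → ℝ → ℂ} {σ : ℝ}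
    (h : ∃ L, ∀ y0, Tendsto (fun ε => ∫ y in Ioi (b σ), Fs a a' f f' y0 ε σ y) (𝓝[>] 0) (𝓝 L)) (y0 : ℝ) :
    Tendsto (fun ε => ∫ y in Ioi (b σ), Fs a a' f f' y0 ε σ y) (𝓝[>] 0) (𝓝 (Gl a b a' f f' σ)) := by
  unfold Gl; rw [dif_pos h]; exact h.choose_spec y0

section
variable {b0 a0 a1 B γ C : ℝ} {n : ℕ} {a b a' b' : ℝ → ℝ} {f f' : ℝ → ℝ → ℂ} {s1 s2 : ℝ}

theorem Loc.lim (h : Loc b0 a0 a1 B γ C n a b a' b' f f' s1 s2) :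
    ∃ K, 0 ≤ K ∧ ∀ᵐ σ, σ ∈ Icc s1 s2 →
      (∃ L, ∀ y0, Tendsto (fun ε => ∫ y in Ioi (b σ), Fs a a' f f' y0 ε σ y) (𝓝[>] 0) (𝓝 L)) ∧
      (∀ y0, ∀ ε ∈ Ioc (0:ℝ) 1, ‖∫ y in Ioi (b σ), Fs a a' f f' y0 ε σ y‖ ≤ K * (|a' σ| + 1)) ∧
      ∃ L, ∀ y0, Tendsto (fun ε => Pe a b f y0 ε σ) (𝓝[>] 0) (𝓝 L) := by
  obtain ⟨K, hK, hosc⟩ := osc (B := B) (a1 := a1) h.hb0 h.ha0 n (γ + 2) C h.hC h.hn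
  obtain ⟨K', hK', hosc'⟩ := osc (B := B) (a1 := a1) h.hb0 h.ha0 n γ C h.hC (by linarith [h.hn])
  refine ⟨K, hK, ?_⟩
  filter_upwards [h.gf] with σ hσ hσ'
  obtain ⟨g0, g1, g2⟩ := hσ hσ'
  obtain ⟨ab0, ab1⟩ := h.ab σ hσ'
  have hbb := h.bb σ hσ'
  obtain ⟨n1, L1, t1⟩ := hosc (a σ) ab0 ab1 _ _ g1 (b σ) hbb
  obtain ⟨n2, L2, t2⟩ := hosc (a σ) ab0 ab1 _ _ g2 (b σ) hbb
  obtain ⟨_, L0, t0⟩ := hosc' (a σ) ab0 ab1 _ _ g0 (b σ) hbb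
  have c1 := g1.base.1 0 1 (by simp)
  have c2 := g2.base.1 0 1 (by simp)
  have split : ∀ y0, ∀ ε ∈ Ioc (0:ℝ) 1, ∫ y in Ioi (b σ), Fs a a' f f' y0 ε σ y =
      Complex.I * a' σ * (∫ y in Ioi (b σ), ww (a σ) y0 ε y * ((y:ℂ)^2 * f σ y)) + ∫ y in Ioi (b σ), ww (a σ) y0 ε y * f' σ y := by
    intro y0 ε hε
    have i1 := ww_integrable (a := a σ) (y0 := y0) h.hb0 hε.1 h.hC hbb.1 c1.1 c1.2
    have i2 := ww_integrable (a := a σ) (y0 := y0) h.hb0 hε.1 h.hC hbb.1 c2.1 c2.2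
    rw [← integral_const_mul, ← integral_add (i1.const_mul _) i2]
    refine integral_congr_ae (ae_of_all _ fun y => ?_)
    simp only [Fs]; ring
  refine ⟨⟨Complex.I * a' σ * L1 + L2, fun y0 => ?_⟩, fun y0 ε hε => ?_, L0, t0⟩
  · refine Tendsto.congr' ?_ (((t1 y0).const_mul (Complex.I * a' σ)).add (t2 y0))
    filter_upwards [Ioc_mem_nhdsGT (zero_lt_one (α := ℝ))] with ε hε using (split y0 ε hε).symm
  · rw [split y0 ε hε]
    refine (norm_add_le _ _).trans ?_
    rw [norm_mul]
    have : ‖Complex.I * (a' σ : ℂ)‖ = |a' σ| := by simp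
    rw [this]
    have := mul_le_mul_of_nonneg_left (n1 y0 ε hε) (abs_nonneg (a' σ))
    linarith [n2 y0 ε hε]

theorem Loc.limg (h : Loc b0 a0 a1 B γ C n a b a' b' f f' s1 s2) :
    ∃ k : ℝ → ℝ, IntervalIntegrable k volume s1 s2 ∧ ∀ᵐ σ, σ ∈ Icc s1 s2 → ∀ y0,
      Tendsto (fun ε => ge a b a' b' f f' y0 ε σ) (𝓝[>] 0) (𝓝 (gg a b a' b' f f' σ)) ∧
      ∀ ε ∈ Ioc (0:ℝ) 1, ‖ge a b a' b' f f' y0 ε σ‖ ≤ k σ := by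
  obtain ⟨K, hK, hl⟩ := h.lim
  have hc : ContinuousOn (fun σ => f σ (b σ)) (Icc s1 s2) :=
    (h.fj B).comp (continuousOn_id.prodMk h.bc) (fun s hs => ⟨hs, h.bb s hs⟩)
  obtain ⟨D, hD⟩ := isCompact_Icc.exists_bound_of_continuousOn hc
  refine ⟨fun σ => K * (|a' σ| + 1) + |b' σ| * D, ?_, ?_⟩
  · exact ((h.ia.abs.add intervalIntegrable_const).const_mul K).add (h.ib.abs.mul_const D)
  · filter_upwards [hl] with σ hσ hσ' y0
    obtain ⟨l1, l2, _⟩ := hσ hσ'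
    refine ⟨(Gl_spec l1 y0).add (((((tendsto_ww (a σ) y0 (b σ)).mul_const _)).neg).const_mul _), fun ε hε => ?_⟩
    unfold ge
    refine (norm_add_le _ _).trans (add_le_add (l2 y0 ε hε) ?_)
    rw [norm_mul, norm_neg, norm_mul, Complex.norm_real, Real.norm_eq_abs]
    have h1 := norm_ww_le (a := a σ) (y0 := y0) (y := b σ) hε.1.le
    have h2 := hD σ hσ'
    have : ‖ww (a σ) y0 ε (b σ)‖ * ‖f σ (b σ)‖ ≤ 1 * D := mul_le_mul h1 h2 (norm_nonneg _) zero_le_one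
    rw [one_mul] at this
    gcongr

theorem Loc.gint (h : Loc b0 a0 a1 B γ C n a b a' b' f f' s1 s2) :
    IntervalIntegrable (gg a b a' b' f f') volume s1 s2 ∧
    ∀ y0, ∀ r ∈ Icc s1 s2, ∀ s ∈ Icc s1 s2, Tendsto (fun ε => ∫ σ in r..s, ge a b a' b' f f' y0 ε σ) (𝓝[>] 0)
      (𝓝 (∫ σ in r..s, gg a b a' b' f f' σ)) := by
  obtain ⟨k, hk, hl⟩ := h.limg
  constructor
  · rw [intervalIntegrable_iff_integrableOn_Icc_of_le h.h12.le] at hk ⊢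
    let e : ℕ → ℝ := fun j => 1 / ((j:ℝ) + 1)
    have he0 : ∀ j, e j ∈ Ioc (0:ℝ) 1 := fun j => ⟨by positivity, by
      rw [div_le_one (by positivity)]; have : (0:ℝ) ≤ j := by positivity
      linarith⟩
    have he : Tendsto e atTop (𝓝[>] 0) := tendsto_nhdsWithin_iff.2 ⟨tendsto_one_div_add_atTop_nhds_zero_nat, Eventually.of_forall fun j => (he0 j).1⟩
    have hl' := (ae_restrict_iff' measurableSet_Icc).2 hl
    refine Integrable.mono' hk (aestronglyMeasurable_of_tendsto_ae (u := atTop) (f := fun j => ge a b a' b' f f' 0 (e j)) ?_ ?_) ?_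
    · intro j
      exact ((intervalIntegrable_iff_integrableOn_Icc_of_le h.h12.le).1 (h.main 0 (he0 j).1).1).1
    · filter_upwards [hl'] with σ hσ using (hσ 0).1.comp he
    · filter_upwards [hl'] with σ hσ
      refine le_of_tendsto ((hσ 0).1.comp he).norm (Eventually.of_forall fun j => (hσ 0).2 _ (he0 j))
  · intro y0 r hr s hs
    have hsub : uIoc r s ⊆ Icc s1 s2 := uIoc_subset_uIcc.trans (uIcc_subset_Icc hr hs)
    refine intervalIntegral.tendsto_integral_filter_of_dominated_convergence k ?_ ?_ (hk.sub_Icc h.h12.le hr hs) ?_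
    · filter_upwards [Ioc_mem_nhdsGT (zero_lt_one (α := ℝ))] with ε hε
      exact (intervalIntegrable_iff.1 ((h.main y0 hε.1).1.sub_Icc h.h12.le hr hs)).1
    · filter_upwards [Ioc_mem_nhdsGT (zero_lt_one (α := ℝ))] with ε hε
      filter_upwards [hl] with σ hσ hσ' using (hσ (hsub hσ') y0).2 ε hε
    · filter_upwards [hl] with σ hσ hσ' using (hσ (hsub hσ') y0).1

theorem Loc.main2 (h : Loc b0 a0 a1 B γ C n a b a' b' f f' s1 s2) (y0 : ℝ) {ε : ℝ} (hε : 0 < ε) :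
    ∀ r ∈ Icc s1 s2, ∀ s ∈ Icc s1 s2, Pe a b f y0 ε s - Pe a b f y0 ε r = ∫ σ in r..s, ge a b a' b' f f' y0 ε σ := by
  intro r hr s hs
  rcases lt_trichotomy r s with hlt | rfl | hlt
  · exact ((h.sub hr hs hlt).main y0 hε).2
  · simp
  · rw [intervalIntegral.integral_symm, ← ((h.sub hs hr hlt).main y0 hε).2]; ring

theorem Loc.conv (h : Loc b0 a0 a1 B γ C n a b a' b' f f' s1 s2) {s : ℝ} (hs : s ∈ Icc s1 s2) :
    ∃ L, ∀ y0, Tendsto (fun ε => Pe a b f y0 ε s) (𝓝[>] 0) (𝓝 L) := by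
  obtain ⟨K, hK, hl⟩ := h.lim
  obtain ⟨r, hr, hr'⟩ : ∃ r ∈ Icc s1 s2, ∃ L, ∀ y0, Tendsto (fun ε => Pe a b f y0 ε r) (𝓝[>] 0) (𝓝 L) := by
    by_contra hcon
    push Not at hcon
    have h0 : ∀ᵐ σ, σ ∉ Icc s1 s2 := by
      filter_upwards [hl] with σ hσ hσ'
      obtain ⟨L, hL⟩ := (hσ hσ').2.2
      obtain ⟨y0, hy0⟩ := hcon σ hσ' L
      exact hy0 (hL y0)
    have := measure_eq_zero_iff_ae_notMem.2 h0
    rw [Real.volume_Icc, ENNReal.ofReal_eq_zero] at this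
    linarith [h.h12]
  obtain ⟨L, hL⟩ := hr'
  refine ⟨L + ∫ σ in r..s, gg a b a' b' f f' σ, fun y0 => ?_⟩
  refine Tendsto.congr' ?_ ((hL y0).add (h.gint.2 y0 r hr s hs))
  filter_upwards [self_mem_nhdsWithin] with ε hε
  rw [← h.main2 y0 hε r hr s hs]; ring

theorem Loc.psi (h : Loc b0 a0 a1 B γ C n a b a' b' f f' s1 s2) :
    ∀ r ∈ Icc s1 s2, ∀ s ∈ Icc s1 s2, Psi a b f s - Psi a b f r = ∫ σ in r..s, gg a b a' b' f f' σ := by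
  intro r hr s hs
  have t1 := (Psi_spec (h.conv hs) 0).sub (Psi_spec (h.conv hr) 0)
  refine tendsto_nhds_unique t1 (Tendsto.congr' ?_ (h.gint.2 0 r hr s hs))
  filter_upwards [self_mem_nhdsWithin] with ε hε
  rw [← h.main2 0 hε r hr s hs]

theorem Loc.fin (h : Loc b0 a0 a1 B γ C n a b a' b' f f' s1 s2) :
    ∀ᵐ s, s ∈ Ioo s1 s2 → HasDerivAt (Psi a b f) (gg a b a' b' f f' s) s ∧
      ∀ y0, Tendsto (fun ε => ∫ y in Ioi (b s), Fs a a' f f' y0 ε s y) (𝓝[>] 0)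
        (𝓝 (gg a b a' b' f f' s + b' s * Complex.exp (Complex.I * a s * (b s) ^ 2) * f s (b s))) := by
  obtain ⟨K, hK, hl⟩ := h.lim
  filter_upwards [hl, h.gint.1.ae_hasDerivAt_integral] with s hs hs2 hmem
  have hmem' := Ioo_subset_Icc_self hmem
  constructor
  · have := hs2 (by rw [uIcc_of_le h.h12.le]; exact hmem') s1 (by simp)
    refine (this.const_add (Psi a b f s1)).congr_of_eventuallyEq ?_
    filter_upwards [Ioo_mem_nhds hmem.1 hmem.2] with u hu
    rw [← h.psi s1 (left_mem_Icc.2 h.h12.le) u (Ioo_subset_Icc_self hu)]; ring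
  · intro y0
    convert Gl_spec (hs hmem').1 y0 using 2
    unfold gg; ring
end

theorem exists_rat_nhds {I : Set ℝ} (hI : IsOpen I) {x : ℝ} (hx : x ∈ I) :
    ∃ p q : ℚ, (p:ℝ) ∈ I ∧ (q:ℝ) ∈ I ∧ (p:ℝ) < x ∧ x < q := by
  obtain ⟨δ, hδ, hball⟩ := Metric.isOpen_iff.1 hI x hx
  obtain ⟨p, hp1, hp2⟩ := exists_rat_btwn (show x - δ < x by linarith)
  obtain ⟨q, hq1, hq2⟩ := exists_rat_btwn (show x < x + δ by linarith)
  refine ⟨p, q, hball ?_, hball ?_, hp2, hq1⟩ <;> rw [Metric.mem_ball, Real.dist_eq, abs_lt] <;> constructor <;> linarith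

theorem stmt15 (I : Set ℝ) (hIo : IsOpen I) (hIc : I.OrdConnected)
    (a b a' b' : ℝ → ℝ) (b₀ : ℝ) (hb₀ : 0 < b₀)
    (haAC : MeasureTheory.LocallyIntegrableOn a' I ∧
      ∀ s₁ ∈ I, ∀ s₂ ∈ I, s₁ < s₂ → a s₂ - a s₁ = ∫ s in s₁..s₂, a' s)
    (hbAC : MeasureTheory.LocallyIntegrableOn b' I ∧
      ∀ s₁ ∈ I, ∀ s₂ ∈ I, s₁ < s₂ → b s₂ - b s₁ = ∫ s in s₁..s₂, b' s)
    (hane : ∀ s ∈ I, a s ≠ 0) (hbge : ∀ s ∈ I, b₀ ≤ b s)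
    (f f' : ℝ → ℝ → ℂ)
    (hfAC : ∀ y ∈ Set.Ici b₀, MeasureTheory.LocallyIntegrableOn (fun s => f' s y) I ∧
      ∀ s₁ ∈ I, ∀ s₂ ∈ I, s₁ < s₂ → f s₂ y - f s₁ y = ∫ s in s₁..s₂, f' s y)
    (n : ℕ) (α : ℝ) (hα : 0 ≤ α) (hn : α + 3 < n)
    (hreg : ∀ᵐ s ∂(MeasureTheory.volume : MeasureTheory.Measure ℝ), s ∈ I →
      MemCnAlpha b₀ n α (f s) ∧ MemCnAlpha b₀ n (α + 2) (f' s))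
    (hbd1 : ∀ s ∈ I, ∃ M : ℝ, ∀ᶠ u in 𝓝[I] s, CnAlphaNorm b₀ n α (f u) ≤ M)
    (hbd2 : ∀ s ∈ I, ∃ M : ℝ, ∀ᶠ u in 𝓝[I] s, CnAlphaNorm b₀ n (α + 2) (f' u) ≤ M) :
    ∃ ψ g : ℝ → ℂ,
      (∀ s ∈ I, ∀ y₀ : ℝ,
        Filter.Tendsto (fun ε : ℝ => ∫ y in Set.Ioi (b s),
            Complex.exp (-(ε : ℂ) * (y - y₀) ^ 2) * Complex.exp (Complex.I * a s * y ^ 2) * f s y)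
          (𝓝[>] 0) (𝓝 (ψ s))) ∧
      MeasureTheory.LocallyIntegrableOn g I ∧
      (∀ s₁ ∈ I, ∀ s₂ ∈ I, s₁ < s₂ → ψ s₂ - ψ s₁ = ∫ s in s₁..s₂, g s) ∧
      ∀ᵐ s ∂(MeasureTheory.volume : MeasureTheory.Measure ℝ), s ∈ I →
        HasDerivAt ψ (g s) s ∧
        ∀ y₀ : ℝ,
          Filter.Tendsto (fun ε : ℝ => ∫ y in Set.Ioi (b s),
              Complex.exp (-(ε : ℂ) * (y - y₀) ^ 2) *
                (Complex.I * a' s * y ^ 2 * Complex.exp (Complex.I * a s * y ^ 2) * f s y +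
                  Complex.exp (Complex.I * a s * y ^ 2) * f' s y))
            (𝓝[>] 0)
            (𝓝 (g s + b' s * Complex.exp (Complex.I * a s * (b s) ^ 2) * f s (b s))) := by
  have loc := Loc.mk' I hIc a b a' b' b₀ hb₀ haAC hbAC hane hbge f f' hfAC n α hα hn hreg hbd1 hbd2
  refine ⟨Psi a b f, gg a b a' b' f f', ?_, ?_, ?_, ?_⟩
  · intro s hs y0
    obtain ⟨p, q, hp, hq, hps, hsq⟩ := exists_rat_nhds hIo hs
    obtain ⟨_, _, _, _, h⟩ := loc p q hp hq (hps.trans hsq)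
    exact Psi_spec (h.conv ⟨hps.le, hsq.le⟩) y0
  · intro s hs
    obtain ⟨p, q, hp, hq, hps, hsq⟩ := exists_rat_nhds hIo hs
    obtain ⟨_, _, _, _, h⟩ := loc p q hp hq (hps.trans hsq)
    exact ⟨Icc p q, mem_nhdsWithin_of_mem_nhds (Icc_mem_nhds hps hsq), (intervalIntegrable_iff_integrableOn_Icc_of_le h.h12.le).1 h.gint.1⟩
  · intro s1 h1 s2 h2 h12
    obtain ⟨_, _, _, _, h⟩ := loc s1 s2 h1 h2 h12
    exact h.psi s1 (left_mem_Icc.2 h12.le) s2 (right_mem_Icc.2 h12.le)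
  · have key : ∀ p q : ℚ, ∀ᵐ s : ℝ, ((p:ℝ) ∈ I ∧ (q:ℝ) ∈ I ∧ (p:ℝ) < s ∧ s < q) → HasDerivAt (Psi a b f) (gg a b a' b' f f' s) s ∧
      ∀ y0, Tendsto (fun ε => ∫ y in Ioi (b s), Fs a a' f f' y0 ε s y) (𝓝[>] 0)
        (𝓝 (gg a b a' b' f f' s + b' s * Complex.exp (Complex.I * a s * (b s) ^ 2) * f s (b s))) := by
      intro p q
      by_cases hpq : (p:ℝ) ∈ I ∧ (q:ℝ) ∈ I ∧ (p:ℝ) < q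
      · obtain ⟨_, _, _, _, h⟩ := loc p q hpq.1 hpq.2.1 hpq.2.2
        filter_upwards [h.fin] with s hs hs' using hs hs'.2.2
      · exact ae_of_all _ fun s hs => absurd ⟨hs.1, hs.2.1, hs.2.2.1.trans hs.2.2.2⟩ hpq
    have key2 := ae_all_iff.2 fun p => ae_all_iff.2 (key p)
    filter_upwards [key2] with s hs hsI
    obtain ⟨p, q, hpq⟩ := exists_rat_nhds hIo hsI
    obtain ⟨h1, h2⟩ := hs p q hpq
    refine ⟨h1, fun y0 => ?_⟩
    convert h2 y0 using 4 with ε y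
    unfold Fs ww; ring
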